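/- Fix a positive integer r, a real number c₀ with 0 < c₀ < 1, and a real number η > 0. Then there exist constants c > 0 and P, depending only on (r, c₀, η), such that: for every prime p ≥ P; for all real numbers M, N ≥ 1 satisfying M⁴·N² ≥ p^{1 + 1/r + η}; and for all sets ℳ, 𝒩 of integers with ℳ ⊆ [M, 2M] ∩ [1, p], 𝒩 ⊆ [N, 2N] ∩ [1, p], #ℳ ≥ c₀·M, and #𝒩 ≥ c₀·N; setting K = ⌊p^{1 + 1/r + η}·(M·N)^{−2} + p^η⌋, the number of triples (m, n, k) with m ∈ ℳ, n ∈ 𝒩, k a positive integer with k ≤ K, and m·n + k a quadratic residue modulo p, is at least c·K·M·N. -/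

import Mathlib

open Finset

/-- An integer `x` is a quadratic residue modulo the prime `p`. -/
def IsQuadRes (p : ℕ) (x : ℤ) : Prop :=
  ¬ ((p : ℤ) ∣ x) ∧ ∃ y : ℤ, y ^ 2 ≡ x [ZMOD (p : ℤ)]

/-! The Burgess–Karatsuba shift method, with the Weil bound supplied by Stepanov's method. Write `χ`
for the quadratic character modulo `p`.

* If some root of `f` has odd multiplicity, then `∑ x, χ (f x) ≪ deg f * √p`: a nonzero polynomial
  of small degree, built from `f ^ (p / 2)`, vanishes to high order at every `x` with `χ (f x) = 1`,
  so there are at most `p / 2 + O(deg f * √p)` such `x`; the same holds for `χ (f x) = -1`.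
* Expanding the `2s`-th moment of `∑ b ≤ B, χ (y + b)` over `y` and applying this bound to
  `f = ∏ i, (X + b i)` shows that, once `B ^ s ≥ √p`, this sum is comparable to `B` for only
  `O(√p)` residues `y`.
* If `∑ k ≤ K, χ (x + k)` is comparable to `K`, replacing `k` by `k + a * b` for `a ≤ A`, `b ≤ B`
  with `A * B` a small multiple of `K` yields many pairs `(x + k, a)` for which `(x + k) / a` is one
  of those `O(√p)` residues. By Cauchy–Schwarz and the divisor bound few pairs can do that, so there
  are few such `x ≤ Y`.
* A product `m * n` takes each value `x` at most `d(x)` times, so for most pairs `(m, n)` the sum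
  `∑ k ≤ K, χ (m * n + k)` is small, and then a positive proportion of the `m * n + k` are residues.
-/

section StepanovMethod

open Polynomial

section DerivCofactor

variable {R : Type*} [CommSemiring R]

/-- The cofactor of `f ^ (n - k)` in the `k`-th derivative of `f ^ n * r`, for `k ≤ n`, as a linear
map in `r`. -/
noncomputable def derivCofactor (f : R[X]) (n : ℕ) : ℕ → R[X] →ₗ[R] R[X]
  | 0 => LinearMap.id
  | k + 1 => (LinearMap.mulLeft R (((n - k : ℕ) : R[X]) * derivative f) +
      LinearMap.mulLeft R f ∘ₗ derivative) ∘ₗ derivCofactor f n k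

lemma derivCofactor_zero_apply (f r : R[X]) (n : ℕ) : derivCofactor f n 0 r = r := rfl

lemma derivCofactor_succ_apply (f r : R[X]) (n k : ℕ) :
    derivCofactor f n (k + 1) r = ((n - k : ℕ) : R[X]) * derivative f * derivCofactor f n k r +
      f * derivative (derivCofactor f n k r) := rfl

lemma natDegree_derivCofactor_le (f r : R[X]) (n k : ℕ) :
    (derivCofactor f n k r).natDegree ≤ r.natDegree + k * f.natDegree := by
  induction k with
  | zero => simp [derivCofactor_zero_apply]
  | succ k ih =>
    rw [derivCofactor_succ_apply, add_mul, one_mul]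
    have hf := natDegree_derivative_le f
    have hq := natDegree_derivative_le (derivCofactor f n k r)
    refine natDegree_add_le_of_degree_le ?_ ?_
    · have hn := natDegree_mul_le (p := ((n - k : ℕ) : R[X])) (q := derivative f)
      rw [natDegree_natCast] at hn
      exact natDegree_mul_le.trans (by omega)
    · exact natDegree_mul_le.trans (by omega)

lemma iterate_derivative_pow_mul (f r : R[X]) {n k : ℕ} (hk : k ≤ n) :
    derivative^[k] (f ^ n * r) = f ^ (n - k) * derivCofactor f n k r := by
  induction k with
  | zero => rfl
  | succ k ih =>
    obtain ⟨e, rfl⟩ := Nat.exists_eq_add_of_le hk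
    rw [Function.iterate_succ_apply', ih (by omega), derivCofactor_succ_apply,
      show k + 1 + e - k = e + 1 by omega, show k + 1 + e - (k + 1) = e by omega,
      derivative_mul, derivative_pow]
    simp only [map_natCast, Nat.add_sub_cancel]
    ring

lemma iterate_derivative_mul_of_derivative_eq_zero {c : R[X]} (hc : derivative c = 0) (q : R[X])
    (k : ℕ) : derivative^[k] (q * c) = derivative^[k] q * c := by
  induction k with
  | zero => rfl
  | succ k ih => rw [Function.iterate_succ_apply', ih, derivative_mul, hc, mul_zero, add_zero,
      Function.iterate_succ_apply']

end DerivCofactor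

lemma eq_zero_of_sum_mul_X_pow_eq_zero {R : Type*} [CommRing R] {q J : ℕ} {g : Fin J → R[X]}
    (hg : ∀ j, X ^ q ∣ g j → g j = 0) (h : ∑ j, g j * X ^ ((j : ℕ) * q) = 0) (j : Fin J) :
    g j = 0 := by
  induction J with
  | zero => exact j.elim0
  | succ J ih =>
    have hsum : ∑ i : Fin J, g i.succ * X ^ ((i.succ : ℕ) * q) =
        (∑ i : Fin J, g i.succ * X ^ ((i : ℕ) * q)) * X ^ q := by
      simp only [sum_mul, mul_assoc, ← pow_add, Fin.val_succ, add_one_mul]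
    rw [Fin.sum_univ_succ, hsum, Fin.val_zero, zero_mul, pow_zero, mul_one] at h
    have hzero : g 0 = 0 := hg 0 (by
      rw [eq_neg_of_add_eq_zero_left h]
      exact (dvd_mul_left _ _).neg_right)
    rw [hzero, zero_add] at h
    exact Fin.cases hzero (ih (fun i => hg i.succ) (mul_X_pow_eq_zero h)) j

lemma eq_zero_of_sq_mul_eq {R : Type*} [CommRing R] [IsDomain R] {f r s : R[X]} {a c : R}
    (ha : Odd (f.rootMultiplicity a)) (hc : c ≠ 0) (h : r ^ 2 * f = C c * s ^ 2) :
    r = 0 ∧ s = 0 := by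
  have hf : f ≠ 0 := by rintro rfl; simp at ha
  have hC : (C c : R[X]) ≠ 0 := by simpa using hc
  by_cases hr : r = 0
  · simpa [hr, hc] using h.symm
  have hs : s ≠ 0 := by
    rintro rfl
    simp [hr, hf] at h
  have hmult := congrArg (rootMultiplicity a) h
  rw [rootMultiplicity_mul (by positivity),
    rootMultiplicity_mul (mul_ne_zero hC (pow_ne_zero 2 hs)), pow_two, pow_two,
    rootMultiplicity_mul (by positivity), rootMultiplicity_mul (by positivity),
    rootMultiplicity_C] at hmult
  obtain ⟨t, ht⟩ := ha
  omega

lemma exists_ne_zero_forall_eq_zero_of_mem_degreeLT {F V : Type*} [Field F] [AddCommGroup V]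
    [Module F V] [FiniteDimensional F V] {l N : ℕ} (Q : Fin l → V →ₗ[F] F[X])
    (hQ : ∀ k v, Q k v ∈ degreeLT F N) (hdim : l * N < Module.finrank F V) :
    ∃ v ≠ 0, ∀ k, Q k v = 0 := by
  have hrank : Module.finrank F (degreeLT F N) = N := by
    rw [(degreeLTEquiv F N).finrank_eq, Module.finrank_fin_fun]
  have : FiniteDimensional F (degreeLT F N) := (degreeLTEquiv F N).symm.finiteDimensional
  have hker : LinearMap.ker (LinearMap.pi fun k => (Q k).codRestrict _ (hQ k)) ≠ ⊥ := by
    refine LinearMap.ker_ne_bot_of_finrank_lt ?_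
    rwa [Module.finrank_pi_fintype, sum_const, hrank, card_univ, Fintype.card_fin, smul_eq_mul]
  obtain ⟨v, hv, hv0⟩ := (Submodule.ne_bot_iff _).1 hker
  exact ⟨v, hv0, fun k => congrArg Subtype.val (congrFun hv k)⟩

lemma mem_degreeLT_succ_iff_natDegree_le {R : Type*} [Semiring R] {q : R[X]} {d : ℕ} :
    q ∈ degreeLT R (d + 1) ↔ q.natDegree ≤ d := by
  rw [degreeLT_succ_eq_degreeLE, mem_degreeLE, natDegree_le_iff_degree_le]

lemma exists_derivCofactor_sum_eq_zero {F : Type*} [Field F] (f : F[X]) (b : F) (n₁ n₂ : ℕ)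
    {d J l : ℕ} (hdim : l * (d + l * f.natDegree + J) < J * (2 * (d + 1))) :
    ∃ r s : Fin J → F[X], (∀ j, (r j).natDegree ≤ d) ∧ (∀ j, (s j).natDegree ≤ d) ∧
      (∃ j, ¬ (r j = 0 ∧ s j = 0)) ∧ ∀ k < l,
        ∑ j, (derivCofactor f n₁ k (r j) + C b * derivCofactor f n₂ k (s j)) * X ^ (j : ℕ) = 0 := by
  let W := degreeLT F (d + 1)
  let Q (k : ℕ) : (Fin J → W × W) →ₗ[F] F[X] := ∑ j : Fin J, LinearMap.mulRight F (X ^ (j : ℕ)) ∘ₗ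
    ((derivCofactor f n₁ k ∘ₗ W.subtype).coprod
      (b • derivCofactor f n₂ k ∘ₗ W.subtype)) ∘ₗ LinearMap.proj j
  have hQ (k v) : Q k v = ∑ j, (derivCofactor f n₁ k (v j).1 +
      C b * derivCofactor f n₂ k (v j).2) * X ^ (j : ℕ) := by
    simp [Q, smul_eq_C_mul]
  have hdeg (q : W) : q.1.natDegree ≤ d := mem_degreeLT_succ_iff_natDegree_le.1 q.2
  have hW : Module.finrank F W = d + 1 := by
    rw [(degreeLTEquiv F (d + 1)).finrank_eq, Module.finrank_fin_fun]
  have : FiniteDimensional F W := (degreeLTEquiv F (d + 1)).symm.finiteDimensional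
  have hmem (k : Fin l) (v) : Q k v ∈ degreeLT F (d + l * f.natDegree + J) := by
    rw [hQ]
    refine Submodule.sum_mem _ fun j _ => degreeLT_mono (m := d + l * f.natDegree + j + 1)
      (by omega) (mem_degreeLT_succ_iff_natDegree_le.2 ?_)
    refine natDegree_mul_le_of_le (natDegree_add_le_of_degree_le ?_
      ((natDegree_C_mul_le _ _).trans ?_)) (natDegree_X_pow_le _)
    all_goals
      exact (natDegree_derivCofactor_le _ _ _ _).trans
        (add_le_add (hdeg _) (Nat.mul_le_mul_right _ k.2.le))
  obtain ⟨v, hv, hzero⟩ := exists_ne_zero_forall_eq_zero_of_mem_degreeLT (fun k => Q k) hmem (by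
    rwa [Module.finrank_pi_fintype, sum_const, Module.finrank_prod, hW, card_univ, Fintype.card_fin,
      smul_eq_mul, ← two_mul])
  refine ⟨fun j => (v j).1, fun j => (v j).2, fun j => hdeg _, fun j => hdeg _, ?_, fun k hk => ?_⟩
  · by_contra! hcon
    exact hv (funext fun j => Prod.ext (Subtype.ext (hcon j).1) (Subtype.ext (hcon j).2))
  · rw [← hQ]
    exact hzero ⟨k, hk⟩

lemma mul_card_le_natDegree_of_forall_X_sub_C_pow_dvd {F : Type*} [Field F] {H : F[X]} (hH : H ≠ 0)
    {l : ℕ} {S : Finset F} (h : ∀ x ∈ S, (X - C x) ^ l ∣ H) : l * #S ≤ H.natDegree := by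
  have hprod : (∏ x ∈ S, (X - C x) ^ l) ∣ H := prod_dvd_of_coprime
    (fun x _ y _ hxy => (isCoprime_X_sub_C_of_isUnit_sub (sub_ne_zero.2 hxy).isUnit).pow) h
  calc l * #S = (∏ x ∈ S, (X - C x) ^ l).natDegree := by
        rw [natDegree_prod _ _ fun x _ => pow_ne_zero _ (X_sub_C_ne_zero x)]
        simp [mul_comm]
    _ ≤ H.natDegree := natDegree_le_of_dvd hprod hH

section PrimeField

variable {p : ℕ} [Fact p.Prime]

lemma X_sub_C_pow_dvd_of_forall_isRoot_iterate_derivative {H : (ZMod p)[X]} {x : ZMod p} {l : ℕ}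
    (hl : l ≤ p) (h : ∀ k < l, (derivative^[k] H).IsRoot x) : (X - C x) ^ l ∣ H := by
  rcases eq_or_ne H 0 with rfl | hH
  · exact dvd_zero _
  obtain - | l := l
  · simp
  rw [← le_rootMultiplicity_iff hH]
  refine lt_rootMultiplicity_of_isRoot_iterate_derivative_of_mem_nonZeroDivisors' hH
    (fun k hk => h k (by omega)) fun k hk hk0 => ?_
  rw [mem_nonZeroDivisors_iff_ne_zero, Ne, ZMod.natCast_eq_zero_iff]
  exact fun hdvd => absurd (Nat.le_of_dvd (Nat.pos_of_ne_zero hk0) hdvd) (by omega)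

lemma eval_iterate_derivative_pow_mul_X_pow (f r : (ZMod p)[X]) {n k : ℕ} (hk : k ≤ n) (j : ℕ)
    (x : ZMod p) : (derivative^[k] (f ^ n * r * X ^ (j * p))).eval x =
      f.eval x ^ (n - k) * (derivCofactor f n k r * X ^ j).eval x := by
  have hX : derivative (X ^ (j * p) : (ZMod p)[X]) = 0 := by simp [derivative_X_pow]
  rw [iterate_derivative_mul_of_derivative_eq_zero hX, iterate_derivative_pow_mul f r hk]
  simp only [eval_mul, eval_pow, eval_X, mul_comm j p, pow_mul, ZMod.pow_card, mul_assoc]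

lemma eq_zero_of_X_pow_dvd_add_pow_mul (hp : p ≠ 2) {f r s : (ZMod p)[X]} {d : ℕ} {a : ZMod p}
    (ha : Odd (f.rootMultiplicity a)) (h0 : f.eval 0 ≠ 0) (hr : r.natDegree ≤ d)
    (hs : s.natDegree ≤ d) (hd : 2 * d + f.natDegree < p) (h : X ^ p ∣ r + f ^ (p / 2) * s) :
    r = 0 ∧ s = 0 := by
  have hodd : p / 2 * 2 + 1 = p := Nat.div_two_mul_two_add_one_of_odd
    ((Fact.out : p.Prime).odd_of_ne_two hp)
  have hf : X ^ p ∣ f ^ p - C (f.eval 0) := by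
    rw [← ZMod.pow_card (f.eval 0), C_pow, ← sub_pow_char]
    refine pow_dvd_pow_of_dvd (X_dvd_iff.2 ?_) p
    simp [coeff_zero_eq_eval_zero]
  have hdvd : X ^ p ∣ r ^ 2 * f - C (f.eval 0) * s ^ 2 := by
    have hpow : f ^ p = (f ^ (p / 2)) ^ 2 * f := by rw [← pow_mul, ← pow_succ, hodd]
    have hsplit : r ^ 2 * f - C (f.eval 0) * s ^ 2 =
        (r + f ^ (p / 2) * s) * ((r - f ^ (p / 2) * s) * f) + (f ^ p - C (f.eval 0)) * s ^ 2 := by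
      rw [hpow]; ring
    rw [hsplit]
    exact dvd_add (h.mul_right _) (hf.mul_right _)
  refine eq_zero_of_sq_mul_eq ha h0 (sub_eq_zero.1 (eq_zero_of_dvd_of_natDegree_lt hdvd ?_))
  rw [natDegree_X_pow]
  refine (natDegree_sub_le_of_le (natDegree_mul_le_of_le (natDegree_pow_le_of_le 2 hr) le_rfl)
    ((natDegree_C_mul_le _ _).trans (natDegree_pow_le_of_le 2 hs))).trans_lt ?_
  omega

/-- Stepanov's auxiliary polynomial `∑ j, (f ^ l * r j + f ^ (l + p / 2) * s j) * X ^ (j * p)`: for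
suitable `r` and `s` it vanishes to order `l` wherever `f ^ (p / 2)` takes a prescribed value. The
factor `f ^ l` keeps the exponents of `f` nonnegative in its derivatives of order at most `l`. -/
noncomputable def stepanovPoly (f : (ZMod p)[X]) (l : ℕ) {J : ℕ} (r s : Fin J → (ZMod p)[X]) :
    (ZMod p)[X] :=
  ∑ j : Fin J, (f ^ l * r j * X ^ ((j : ℕ) * p) + f ^ (l + p / 2) * s j * X ^ ((j : ℕ) * p))

lemma stepanovPoly_ne_zero (hp : p ≠ 2) {f : (ZMod p)[X]} {l d J : ℕ} {r s : Fin J → (ZMod p)[X]}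
    {a : ZMod p} (ha : Odd (f.rootMultiplicity a)) (h0 : f.eval 0 ≠ 0)
    (hr : ∀ j, (r j).natDegree ≤ d) (hs : ∀ j, (s j).natDegree ≤ d)
    (hd : 2 * d + f.natDegree < p) (hne : ∃ j, ¬ (r j = 0 ∧ s j = 0)) :
    stepanovPoly f l r s ≠ 0 := by
  intro hzero
  have hf : f ≠ 0 := by rintro rfl; simp at h0
  have hfactor : stepanovPoly f l r s =
      f ^ l * ∑ j : Fin J, (r j + f ^ (p / 2) * s j) * X ^ ((j : ℕ) * p) := by
    rw [stepanovPoly, mul_sum]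
    exact sum_congr rfl fun j _ => by ring
  have hdvd (j : Fin J) : X ^ p ∣ r j + f ^ (p / 2) * s j → r j = 0 ∧ s j = 0 :=
    eq_zero_of_X_pow_dvd_add_pow_mul hp ha h0 (hr j) (hs j) hd
  obtain ⟨j, hj⟩ := hne
  have hsum := (mul_eq_zero.1 (hfactor ▸ hzero)).resolve_left (pow_ne_zero _ hf)
  have hterm := eq_zero_of_sum_mul_X_pow_eq_zero
    (fun j hj => by rw [(hdvd j hj).1, (hdvd j hj).2, mul_zero, add_zero]) hsum j
  exact hj (hdvd j (hterm ▸ dvd_zero _))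

lemma natDegree_stepanovPoly_le {f : (ZMod p)[X]} {l d J : ℕ} {r s : Fin J → (ZMod p)[X]}
    (hr : ∀ j, (r j).natDegree ≤ d) (hs : ∀ j, (s j).natDegree ≤ d) :
    (stepanovPoly f l r s).natDegree ≤ (l + p / 2) * f.natDegree + d + J * p := by
  have hterm (n : ℕ) (q : (ZMod p)[X]) (j : Fin J) (hn : n ≤ l + p / 2) (hq : q.natDegree ≤ d) :
      (f ^ n * q * X ^ ((j : ℕ) * p)).natDegree ≤ (l + p / 2) * f.natDegree + d + J * p :=
    natDegree_mul_le_of_le (natDegree_mul_le_of_le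
      (natDegree_pow_le.trans (Nat.mul_le_mul_right _ hn)) hq)
      ((natDegree_X_pow_le _).trans (Nat.mul_le_mul_right _ j.2.le))
  exact natDegree_sum_le_of_forall_le _ _ fun j _ => natDegree_add_le_of_degree_le
    (hterm _ _ j (Nat.le_add_right _ _) (hr j)) (hterm _ _ j le_rfl (hs j))

lemma X_sub_C_pow_dvd_stepanovPoly {f : (ZMod p)[X]} {l J : ℕ} {r s : Fin J → (ZMod p)[X]}
    {x b : ZMod p} (hl : l ≤ p) (hx : f.eval x ^ (p / 2) = b)
    (h : ∀ k < l, ∑ j, (derivCofactor f l k (r j) + C b * derivCofactor f (l + p / 2) k (s j)) *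
      X ^ (j : ℕ) = 0) :
    (X - C x) ^ l ∣ stepanovPoly f l r s := by
  refine X_sub_C_pow_dvd_of_forall_isRoot_iterate_derivative hl fun k hk => ?_
  have hterm (j : Fin J) : (derivative^[k] (f ^ l * r j * X ^ ((j : ℕ) * p) +
      f ^ (l + p / 2) * s j * X ^ ((j : ℕ) * p))).eval x = f.eval x ^ (l - k) *
      ((derivCofactor f l k (r j) + C b * derivCofactor f (l + p / 2) k (s j)) *
        X ^ (j : ℕ)).eval x := by
    rw [iterate_map_add derivative, eval_add, eval_iterate_derivative_pow_mul_X_pow _ _ hk.le,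
      eval_iterate_derivative_pow_mul_X_pow _ _ (by omega), Nat.sub_add_comm hk.le, pow_add, hx]
    simp only [eval_add, eval_mul, eval_C]
    ring
  rw [IsRoot, stepanovPoly, iterate_derivative_sum, eval_finsetSum,
    sum_congr rfl fun j _ => hterm j, ← mul_sum, ← eval_finsetSum, h k hk, eval_zero, mul_zero]

lemma mul_card_eval_pow_eq_le (hp : p ≠ 2) {f : (ZMod p)[X]} {a : ZMod p}
    (ha : Odd (f.rootMultiplicity a)) (h0 : f.eval 0 ≠ 0) (b : ZMod p) {d J l : ℕ}
    (hd : 2 * d + f.natDegree < p) (hl : l ≤ p)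
    (hdim : l * (d + l * f.natDegree + J) < J * (2 * (d + 1))) :
    l * #{x | f.eval x ^ (p / 2) = b} ≤ (l + p / 2) * f.natDegree + d + J * p := by
  obtain ⟨r, s, hr, hs, hne, hzero⟩ :=
    exists_derivCofactor_sum_eq_zero f b l (l + p / 2) hdim
  exact (mul_card_le_natDegree_of_forall_X_sub_C_pow_dvd
    (stepanovPoly_ne_zero hp ha h0 hr hs hd hne)
    fun x hx => X_sub_C_pow_dvd_stepanovPoly hl (mem_filter.1 hx).2 hzero).trans
    (natDegree_stepanovPoly_le hr hs)

end PrimeField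

end StepanovMethod

section CharacterSums

open Polynomial

lemma exists_stepanov_parameters {p m : ℕ} (hm : 0 < m) (hp : 4 * m + 16 ≤ p) :
    ∃ d J l : ℕ, 2 * d + m < p ∧ 0 < l ∧ l ≤ p ∧ l * (d + l * m + J) < J * (2 * (d + 1)) ∧
      (((l + p / 2) * m + d + J * p : ℕ) : ℝ) ≤ l * (p / 2 + 30 * m * √p) := by
  obtain ⟨l, hl, hl'⟩ : ∃ l, l * l ≤ p ∧ p < (l + 1) * (l + 1) :=
    ⟨p.sqrt, p.sqrt_le, p.lt_succ_sqrt⟩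
  obtain ⟨d, hd, hd'⟩ : ∃ d, 2 * d + m < p ∧ p ≤ 2 * d + m + 2 :=
    ⟨(p - m - 1) / 2, by omega, by omega⟩
  obtain ⟨J, hJ, hJ'⟩ : ∃ J, 2 * J ≤ l + 8 * m + 8 ∧ l + 8 * m + 7 ≤ 2 * J :=
    ⟨l / 2 + 4 * m + 4, by omega, by omega⟩
  have hl4 : 4 ≤ l := by nlinarith
  have hlp : 4 * l ≤ p := (Nat.mul_le_mul_right _ hl4).trans hl
  refine ⟨d, J, l, hd, by omega, by omega, ?_, ?_⟩
  · have hJd : (l + 8 * m + 7) * (d + 1) ≤ 2 * J * (d + 1) := Nat.mul_le_mul_right _ hJ'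
    have hlJ : l * (2 * J) ≤ l * (l + 8 * m + 8) := Nat.mul_le_mul_left _ hJ
    have hllm : l * l * m ≤ p * m := Nat.mul_le_mul_right _ hl
    have hlm : 4 * l * m ≤ p * m := Nat.mul_le_mul_right _ hlp
    have hmp : m * p ≤ m * (2 * d + m + 2) := Nat.mul_le_mul_left _ hd'
    have hmm : m * (4 * m + 16) ≤ m * p := Nat.mul_le_mul_left _ hp
    nlinarith
  · have htotal : 2 * ((l + p / 2) * m + d + J * p) ≤
        2 * l * m + p * m + p + (l + 8 * m + 8) * p := by
      have hpm : p / 2 * 2 * m ≤ p * m := Nat.mul_le_mul_right _ (Nat.div_mul_le_self p 2)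
      have hJp : 2 * J * p ≤ (l + 8 * m + 8) * p := Nat.mul_le_mul_right _ hJ
      nlinarith
    have htotalR : 2 * (((l + p / 2) * m + d + J * p : ℕ) : ℝ) ≤
        2 * l * m + p * m + p + (l + 8 * m + 8) * p := by exact_mod_cast htotal
    have hlR : (4 : ℝ) ≤ l := by exact_mod_cast hl4
    have hmR : (1 : ℝ) ≤ m := by exact_mod_cast hm
    have hsqrt : √(p : ℝ) ≤ l + 1 := by
      rw [Real.sqrt_le_left (by positivity), sq]
      exact_mod_cast hl'.le
    have hsqrt1 : 1 ≤ √(p : ℝ) := Real.one_le_sqrt.2 (by exact_mod_cast (by omega : 1 ≤ p))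
    have hpl : (p : ℝ) ≤ 5 / 4 * l * √p := by
      nlinarith [Real.mul_self_sqrt (p.cast_nonneg (α := ℝ))]
    have hmpl : (m : ℝ) * p ≤ m * (5 / 4 * l * √p) := by gcongr
    have hlm : (l : ℝ) * m * 1 ≤ l * m * √p := by gcongr
    nlinarith

variable {p : ℕ} [Fact p.Prime]

variable (p) in
/-- The quadratic character modulo `p` with real values. -/
noncomputable def quadChar : MulChar (ZMod p) ℝ :=
  (quadraticChar (ZMod p)).ringHomComp (Int.castRingHom ℝ)

lemma quadChar_apply (y : ZMod p) : quadChar p y = (quadraticChar (ZMod p) y : ℤ) := rfl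

lemma quadChar_eq_one_or_neg_one {y : ZMod p} (hy : y ≠ 0) :
    quadChar p y = 1 ∨ quadChar p y = -1 := by
  rcases quadraticChar_dichotomy hy with h | h <;> simp [quadChar_apply, h]

lemma abs_quadChar_le_one (y : ZMod p) : |quadChar p y| ≤ 1 := by
  rcases eq_or_ne y 0 with rfl | hy
  · simp [MulChar.map_zero]
  · rcases quadChar_eq_one_or_neg_one hy with h | h <;> simp [h]

lemma abs_prod_quadChar_le_one {ι : Type*} (s : Finset ι) (y : ι → ZMod p) :
    |∏ i ∈ s, quadChar p (y i)| ≤ 1 := by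
  rw [abs_prod]
  exact prod_le_one (fun _ _ => abs_nonneg _) fun _ _ => abs_quadChar_le_one _

lemma one_add_mul_quadChar_le (hp : p ≠ 2) (ε : ℤˣ) (y : ZMod p) :
    1 + (ε : ℝ) * quadChar p y ≤
      2 * (if y ^ (p / 2) = ((ε : ℤ) : ZMod p) then 1 else 0) + if y = 0 then 1 else 0 := by
  have hchar : ringChar (ZMod p) ≠ 2 := by rwa [ZMod.ringChar_zmod_n]
  rcases eq_or_ne y 0 with rfl | hy
  · rw [MulChar.map_zero, mul_zero, add_zero, if_pos rfl]
    split_ifs <;> norm_num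
  have hpow := quadraticChar_eq_pow_of_char_ne_two' hchar y
  rw [ZMod.card] at hpow
  rw [if_neg hy, add_zero, quadChar_apply]
  by_cases hε : quadraticChar (ZMod p) y = ε
  · rw [if_pos (by rw [← hpow, hε]), hε]
    rcases Int.units_eq_one_or ε with rfl | rfl <;> norm_num
  · have hneg : quadraticChar (ZMod p) y = -ε := by
      rcases Int.units_eq_one_or ε with rfl | rfl <;>
        rcases quadraticChar_dichotomy hy with h | h <;> simp_all
    have hzero : 1 + (ε : ℝ) * ((-(ε : ℤ) : ℤ) : ℝ) = 0 := by
      rcases Int.units_eq_one_or ε with rfl | rfl <;> norm_num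
    rw [hneg, hzero]
    split_ifs <;> norm_num

lemma natDegree_pos_of_odd_rootMultiplicity {F : Type*} [Field F] {f : F[X]} {a : F}
    (ha : Odd (f.rootMultiplicity a)) : 0 < f.natDegree := by
  classical
  rw [← count_roots] at ha
  exact ha.pos.trans_le ((Multiset.count_le_card _ _).trans (card_roots' f))

lemma card_eval_pow_eq_le {f : (ZMod p)[X]} {a : ZMod p} (ha : Odd (f.rootMultiplicity a))
    (h0 : f.eval 0 ≠ 0) (hp : 4 * f.natDegree + 16 ≤ p) (b : ZMod p) :
    (#{x | f.eval x ^ (p / 2) = b} : ℝ) ≤ p / 2 + 30 * f.natDegree * √p := by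
  obtain ⟨d, J, l, hd, hl0, hl, hdim, hbound⟩ :=
    exists_stepanov_parameters (natDegree_pos_of_odd_rootMultiplicity ha) hp
  have hcount : (l : ℝ) * #{x | f.eval x ^ (p / 2) = b} ≤
      (((l + p / 2) * f.natDegree + d + J * p : ℕ) : ℝ) := by
    exact_mod_cast mul_card_eval_pow_eq_le (by omega) ha h0 b hd hl hdim
  exact le_of_mul_le_mul_left (hcount.trans hbound) (by exact_mod_cast hl0)

lemma one_le_sqrt_prime : 1 ≤ √(p : ℝ) :=
  Real.one_le_sqrt.2 (by exact_mod_cast (Fact.out : p.Prime).one_le)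

lemma abs_sum_quadChar_eval_le_of_eval_zero_ne {f : (ZMod p)[X]} {a : ZMod p}
    (ha : Odd (f.rootMultiplicity a)) (h0 : f.eval 0 ≠ 0) (hp : 4 * f.natDegree + 16 ≤ p) :
    |∑ x, quadChar p (f.eval x)| ≤ 61 * f.natDegree * √p := by
  have hf : f ≠ 0 := by rintro rfl; simp at h0
  have hroots : #{x | f.eval x = 0} ≤ f.natDegree :=
    card_le_degree_of_subset_roots fun x hx => (mem_roots hf).2 (mem_filter.1 hx).2
  have hsigned (ε : ℤˣ) : (ε : ℝ) * ∑ x, quadChar p (f.eval x) ≤ 61 * f.natDegree * √p := by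
    have hsum := sum_le_sum fun x (_ : x ∈ univ) =>
      one_add_mul_quadChar_le (by omega) ε (f.eval x)
    simp only [sum_add_distrib, ← mul_sum, sum_boole, sum_const, card_univ, ZMod.card, nsmul_eq_mul,
      mul_one] at hsum
    have hcount := card_eval_pow_eq_le ha h0 hp ((ε : ℤ) : ZMod p)
    have hrootsR : (#{x | f.eval x = 0} : ℝ) ≤ f.natDegree * √p :=
      (by exact_mod_cast hroots : (#{x | f.eval x = 0} : ℝ) ≤ f.natDegree).trans
        (le_mul_of_one_le_right (by positivity) one_le_sqrt_prime)
    linarith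
  have hpos := hsigned 1
  have hneg := hsigned (-1)
  norm_num at hpos hneg
  exact abs_le.2 ⟨by linarith, hpos⟩

lemma rootMultiplicity_taylor {R : Type*} [CommRing R] (f : R[X]) (a b : R) :
    (taylor b f).rootMultiplicity (a - b) = f.rootMultiplicity a := by
  rw [rootMultiplicity_eq_rootMultiplicity, rootMultiplicity_eq_rootMultiplicity (t := a),
    ← taylor_apply, taylor_taylor, sub_add_cancel, taylor_apply]

theorem abs_sum_quadChar_eval_le {f : (ZMod p)[X]} {a : ZMod p}
    (ha : Odd (f.rootMultiplicity a)) :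
    |∑ x, quadChar p (f.eval x)| ≤ 61 * f.natDegree * √p := by
  have hm := natDegree_pos_of_odd_rootMultiplicity ha
  rcases le_or_gt (4 * f.natDegree + 16) p with hp | hp
  · obtain ⟨x₀, hx₀⟩ := exists_eval_ne_zero_of_natDegree_lt_card f
      (ne_zero_of_natDegree_gt hm) (by
        rw [Cardinal.mk_fintype, ZMod.card]
        exact_mod_cast (by omega : f.natDegree < p))
    have htaylor := abs_sum_quadChar_eval_le_of_eval_zero_ne (f := taylor x₀ f) (a := a - x₀)
      (by rwa [rootMultiplicity_taylor]) (by rwa [taylor_eval, zero_add])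
      (by rwa [natDegree_taylor])
    simp only [taylor_eval, natDegree_taylor] at htaylor
    rw [← Equiv.sum_comp (Equiv.addRight x₀)]
    exact htaylor
  · have htrivial : |∑ x, quadChar p (f.eval x)| ≤ √p * √p := by
      rw [Real.mul_self_sqrt (by positivity)]
      refine (abs_sum_le_sum_abs _ _).trans
        ((sum_le_card_nsmul _ _ 1 fun x _ => abs_quadChar_le_one _).trans_eq ?_)
      rw [card_univ, ZMod.card, nsmul_one]
    have hsqrt : √(p : ℝ) ≤ 61 * f.natDegree := by
      rw [Real.sqrt_le_left (by positivity)]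
      exact_mod_cast (by nlinarith : p ≤ (61 * f.natDegree) ^ 2)
    exact htrivial.trans (by gcongr)

theorem abs_sum_prod_quadChar_add_le {ι : Type*} [Fintype ι] {t : ι → ZMod p} {c : ZMod p}
    (hc : Odd #{i | t i = c}) :
    |∑ x, ∏ i, quadChar p (x + t i)| ≤ 61 * Fintype.card ι * √p := by
  classical
  let f : (ZMod p)[X] := ∏ i, (X - C (-t i))
  have hroots : f.roots = univ.val.map fun i => -t i := by
    rw [← roots_multiset_prod_X_sub_C (univ.val.map fun i => -t i), Multiset.map_map]
    rfl
  have hmult : f.rootMultiplicity (-c) = #{i | t i = c} := by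
    rw [← count_roots, hroots, Multiset.count_map]
    simp only [neg_inj, eq_comm (a := c)]
    rfl
  have hdeg : f.natDegree = Fintype.card ι := by
    rw [natDegree_prod _ _ fun i _ => X_sub_C_ne_zero _]
    simp
  have heval (x : ZMod p) : quadChar p (f.eval x) = ∏ i, quadChar p (x + t i) := by
    simp only [f, eval_prod, map_prod, eval_sub, eval_X, eval_C, sub_neg_eq_add]
  rw [← sum_congr rfl fun x _ => heval x, ← hdeg]
  exact abs_sum_quadChar_eval_le (hmult ▸ hc)

end CharacterSums

section Moments

lemma card_filter_card_image_le {ι α : Type*} [Fintype ι] [Nonempty ι] [DecidableEq α]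
    [DecidableEq ι] (S : Finset α) (k : ℕ) :
    #{t ∈ Fintype.piFinset fun _ : ι => S | #(univ.image t) ≤ k} ≤
      k ^ Fintype.card ι * #S ^ k := by
  have hsub : {t ∈ Fintype.piFinset fun _ : ι => S | #(univ.image t) ≤ k} ⊆
      ((univ : Finset (ι → Fin k)) ×ˢ Fintype.piFinset fun _ : Fin k => S).image
        fun gh => gh.2 ∘ gh.1 := by
    intro t ht
    obtain ⟨hS, hcard⟩ := mem_filter.1 ht
    have hmem (i : ι) : t i ∈ univ.image t := mem_image_of_mem _ (mem_univ i)
    have : Nonempty (univ.image t) := ⟨⟨_, hmem (Classical.arbitrary ι)⟩⟩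
    obtain ⟨e⟩ : Nonempty (univ.image t ↪ Fin k) :=
      Function.Embedding.nonempty_of_card_le (by simpa using hcard)
    refine mem_image.2 ⟨(fun i => e ⟨t i, hmem i⟩, fun j => (Function.invFun e j).1),
      mem_product.2 ⟨mem_univ _, Fintype.mem_piFinset.2 fun j => ?_⟩, funext fun i => ?_⟩
    · obtain ⟨i, -, hi⟩ := mem_image.1 (Function.invFun e j).2
      change (Function.invFun e j).1 ∈ S
      rw [← hi]
      exact Fintype.mem_piFinset.1 hS i
    · simp [Function.leftInverse_invFun e.injective _]
  refine (card_le_card hsub).trans (card_image_le.trans_eq ?_)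
  simp

lemma exists_odd_card_fiber {ι α : Type*} [Fintype ι] [DecidableEq α] {t : ι → α}
    (h : Fintype.card ι < 2 * #(univ.image t)) : ∃ c, Odd #{i | t i = c} := by
  by_contra! heven
  have htwo : ∀ c ∈ univ.image t, 2 ≤ #{i | t i = c} := by
    intro c hc
    obtain ⟨i, -, hi⟩ := mem_image.1 hc
    have hpos : 0 < #{i | t i = c} := card_pos.2 ⟨i, by simpa using hi⟩
    obtain ⟨w, hw⟩ := Nat.not_odd_iff_even.1 (heven c)
    omega
  have hsum := card_nsmul_le_sum _ _ 2 htwo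
  rw [← card_eq_sum_card_image t univ, card_univ, smul_eq_mul] at hsum
  omega

variable {p : ℕ} [Fact p.Prime]

/-- Only the tuples `t` in the expanded power all of whose values are attained an even number of
times escape the Weil bound, and these take at most `s` distinct values. -/
theorem sum_sum_quadChar_pow_le {s : ℕ} (hs : 0 < s) (S : Finset (ZMod p)) :
    ∑ x, (∑ c ∈ S, quadChar p (x + c)) ^ (2 * s) ≤
      s ^ (2 * s) * #S ^ s * p + 122 * s * #S ^ (2 * s) * √p := by
  have : Nonempty (Fin (2 * s)) := ⟨⟨0, by omega⟩⟩
  set T := Fintype.piFinset fun _ : Fin (2 * s) => S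
  simp_rw [sum_pow']
  rw [sum_comm, ← sum_filter_add_sum_filter_not T fun t => #(univ.image t) ≤ s]
  refine add_le_add ?_ ?_
  · calc ∑ t ∈ T with #(univ.image t) ≤ s, ∑ x, ∏ i, quadChar p (x + t i)
        ≤ ∑ t ∈ T with #(univ.image t) ≤ s, ∑ _x : ZMod p, (1 : ℝ) := by
          gcongr
          exact (le_abs_self _).trans (abs_prod_quadChar_le_one _ _)
      _ = #{t ∈ T | #(univ.image t) ≤ s} * (p : ℝ) := by simp [ZMod.card]
      _ ≤ s ^ (2 * s) * #S ^ s * p := by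
          have hfew := card_filter_card_image_le (ι := Fin (2 * s)) S s
          rw [Fintype.card_fin] at hfew
          gcongr
          exact_mod_cast hfew
  · calc ∑ t ∈ T with ¬ #(univ.image t) ≤ s, ∑ x, ∏ i, quadChar p (x + t i)
        ≤ ∑ t ∈ T with ¬ #(univ.image t) ≤ s, 61 * (2 * s : ℕ) * √p := by
          refine sum_le_sum fun t ht => (le_abs_self _).trans ?_
          obtain ⟨c, hc⟩ := exists_odd_card_fiber (t := t) (by
            rw [Fintype.card_fin]
            have hdistinct := (mem_filter.1 ht).2
            omega)
          simpa using abs_sum_prod_quadChar_add_le hc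
      _ ≤ ∑ _t ∈ T, 61 * (2 * s : ℕ) * √p :=
          sum_le_sum_of_subset_of_nonneg (filter_subset _ _) fun _ _ _ => by positivity
      _ = 122 * s * #S ^ (2 * s) * √p := by
          simp [T]
          ring

end Moments

section DivisorBound

lemma add_one_le_mul_pow_of_one_lt {x : ℝ} (hx : 1 < x) (e : ℕ) :
    (e : ℝ) + 1 ≤ (1 + 1 / (x - 1)) * x ^ e := by
  have hx' : 0 < x - 1 := sub_pos.2 hx
  have hbernoulli : 1 + e * (x - 1) ≤ x ^ e := by
    simpa using one_add_mul_le_pow (by linarith : -2 ≤ x - 1) e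
  calc (e : ℝ) + 1 ≤ e + 1 + (e * (x - 1) + 1 / (x - 1)) := le_add_of_nonneg_right (by positivity)
    _ = (1 + 1 / (x - 1)) * (1 + e * (x - 1)) := by field_simp; ring
    _ ≤ _ := by gcongr

lemma add_one_le_pow_of_two_le {x : ℝ} (hx : 2 ≤ x) (e : ℕ) : (e : ℝ) + 1 ≤ x ^ e :=
  calc (e : ℝ) + 1 ≤ 2 ^ e := by exact_mod_cast Nat.lt_two_pow_self (n := e)
    _ ≤ x ^ e := by gcongr

lemma natCast_rpow_eq_prod_primeFactors {n : ℕ} (hn : n ≠ 0) (ε : ℝ) :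
    (n : ℝ) ^ ε = ∏ q ∈ n.primeFactors, ((q : ℝ) ^ ε) ^ n.factorization q := by
  conv_lhs => rw [← Nat.prod_factorization_pow_eq_self hn, Finsupp.prod, Nat.cast_prod]
  rw [← Real.finsetProd_rpow _ _ fun i _ => Nat.cast_nonneg _]
  refine prod_congr rfl fun q _ => ?_
  rw [Nat.cast_pow, ← Real.rpow_natCast, ← Real.rpow_mul q.cast_nonneg, mul_comm,
    Real.rpow_mul q.cast_nonneg, Real.rpow_natCast]

theorem exists_card_divisors_le_mul_rpow {ε : ℝ} (hε : 0 < ε) :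
    ∃ C : ℝ, ∀ n : ℕ, (#n.divisors : ℝ) ≤ C * (n : ℝ) ^ ε := by
  have htwo : (1 : ℝ) < 2 ^ ε := Real.one_lt_rpow one_lt_two hε
  set c : ℝ := 1 + 1 / (2 ^ ε - 1)
  have hc : 1 ≤ c := le_add_of_nonneg_right (one_div_nonneg.2 (sub_pos.2 htwo).le)
  set W : ℕ := ⌈(2 : ℝ) ^ (1 / ε)⌉₊
  refine ⟨c ^ W, fun n => ?_⟩
  rcases eq_or_ne n 0 with rfl | hn
  · simp [hε.ne']
  have hlocal : ∀ q ∈ n.primeFactors, ((n.factorization q + 1 : ℕ) : ℝ) ≤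
      (if q < W then c else 1) * ((q : ℝ) ^ ε) ^ n.factorization q := by
    intro q hq
    have hq2 : (2 : ℝ) ≤ q := by exact_mod_cast (Nat.prime_of_mem_primeFactors hq).two_le
    push_cast
    split_ifs with hW
    · exact (add_one_le_mul_pow_of_one_lt htwo _).trans (by gcongr)
    · rw [one_mul]
      refine add_one_le_pow_of_two_le ?_ _
      calc (2 : ℝ) = ((2 : ℝ) ^ (1 / ε)) ^ ε := by
            rw [← Real.rpow_mul zero_le_two, one_div_mul_cancel hε.ne', Real.rpow_one]
        _ ≤ (q : ℝ) ^ ε := by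
            gcongr
            exact (Nat.le_ceil _).trans (by exact_mod_cast not_lt.1 hW)
  have hsmall : #{q ∈ n.primeFactors | q < W} ≤ W :=
    (card_le_card fun q hq => mem_range.2 (mem_filter.1 hq).2).trans_eq (card_range W)
  rw [Nat.card_divisors hn, Nat.cast_prod]
  refine (prod_le_prod (fun _ _ => by positivity) hlocal).trans ?_
  rw [prod_mul_distrib, ← natCast_rpow_eq_prod_primeFactors hn, ← prod_filter, prod_const]
  gcongr

end DivisorBound

section Asymptotics

open Filter

lemma eventually_le_natCast_rpow (C : ℝ) {θ : ℝ} (hθ : 0 < θ) :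
    ∀ᶠ n : ℕ in atTop, C ≤ (n : ℝ) ^ θ :=
  ((tendsto_rpow_atTop hθ).comp tendsto_natCast_atTop_atTop).eventually_ge_atTop C

lemma eventually_card_divisors_le_rpow (E : ℝ) {ε : ℝ} (hε : 0 < ε) :
    ∀ᶠ q : ℕ in atTop, ∀ n : ℕ, (n : ℝ) ≤ (q : ℝ) ^ E → (#n.divisors : ℝ) ≤ (q : ℝ) ^ ε := by
  obtain ⟨C, hdiv⟩ := exists_card_divisors_le_mul_rpow
    (ε := ε / (2 * (|E| + 1))) (by positivity)
  filter_upwards [eventually_le_natCast_rpow C (half_pos hε), eventually_ge_atTop 1]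
    with q hCq hq n hn
  have hq1 : (1 : ℝ) ≤ q := by exact_mod_cast hq
  have hexp : E * (ε / (2 * (|E| + 1))) ≤ ε / 2 := by
    calc E * (ε / (2 * (|E| + 1))) ≤ (|E| + 1) * (ε / (2 * (|E| + 1))) := by
          gcongr
          linarith [le_abs_self E]
      _ = ε / 2 := by field_simp
  calc (#n.divisors : ℝ) ≤ C * (n : ℝ) ^ (ε / (2 * (|E| + 1))) := hdiv n
    _ ≤ (q : ℝ) ^ (ε / 2) * ((q : ℝ) ^ E) ^ (ε / (2 * (|E| + 1))) := by gcongr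
    _ = (q : ℝ) ^ (ε / 2) * (q : ℝ) ^ (E * (ε / (2 * (|E| + 1)))) := by
        rw [Real.rpow_mul (by positivity)]
    _ ≤ (q : ℝ) ^ (ε / 2) * (q : ℝ) ^ (ε / 2) := by gcongr
    _ = (q : ℝ) ^ ε := by rw [← Real.rpow_add (by positivity), add_halves]

end Asymptotics

section ShortSums

variable {p : ℕ} [Fact p.Prime]

/-- The short character sum over the residues `y + 1, …, y + K`. -/
noncomputable def quadCharSum (p : ℕ) [Fact p.Prime] (K : ℕ) (y : ZMod p) : ℝ :=
  ∑ k ∈ Icc 1 K, quadChar p (y + k)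

/-- The residues whose short character sum of length `K` is at least `δ` times the trivial
bound `K`. -/
noncomputable def largeSumSet (p : ℕ) [Fact p.Prime] (K : ℕ) (δ : ℝ) : Finset (ZMod p) :=
  {y | δ * K ≤ |quadCharSum p K y|}

lemma mem_largeSumSet {K : ℕ} {δ : ℝ} {y : ZMod p} :
    y ∈ largeSumSet p K δ ↔ δ * K ≤ |quadCharSum p K y| := by
  simp [largeSumSet]

lemma abs_quadCharSum_le (K : ℕ) (y : ZMod p) : |quadCharSum p K y| ≤ K := by
  refine (abs_sum_le_sum_abs _ _).trans ?_
  refine (sum_le_card_nsmul _ _ 1 fun k _ => abs_quadChar_le_one _).trans_eq ?_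
  simp

lemma quadCharSum_add (J K : ℕ) (y : ZMod p) :
    quadCharSum p (J + K) y = quadCharSum p J y + quadCharSum p K (y + J) := by
  induction K with
  | zero => simp [quadCharSum]
  | succ K ih =>
    simp only [quadCharSum, ← add_assoc J K 1, sum_Icc_succ_top (Nat.le_add_left 1 _)] at ih ⊢
    rw [ih]
    push_cast
    ring_nf

lemma abs_quadCharSum_add_sub_le (K j : ℕ) (y : ZMod p) :
    |quadCharSum p K (y + j) - quadCharSum p K y| ≤ 2 * j := by
  have hcomm := (quadCharSum_add j K y).symm.trans
    ((congrArg (quadCharSum p · y) (add_comm j K)).trans (quadCharSum_add K j y))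
  calc |quadCharSum p K (y + j) - quadCharSum p K y|
      = |quadCharSum p j (y + K) - quadCharSum p j y| := by congr 1; linarith
    _ ≤ |quadCharSum p j (y + K)| + |quadCharSum p j y| := abs_sub _ _
    _ ≤ j + j := add_le_add (abs_quadCharSum_le j _) (abs_quadCharSum_le j y)
    _ = 2 * j := (two_mul _).symm

lemma natCast_ne_zero_of_mem_Icc {A a : ℕ} (hA : A < p) (ha : a ∈ Icc 1 A) :
    (a : ZMod p) ≠ 0 := by
  rw [mem_Icc] at ha
  rw [Ne, ZMod.natCast_eq_zero_iff]
  exact fun h => by linarith [Nat.le_of_dvd ha.1 h]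

lemma injOn_natCast_Icc {K : ℕ} (hK : K ≤ p) :
    Set.InjOn (fun k : ℕ => (k : ZMod p)) (Icc 1 K) := by
  intro a ha b hb hab
  rw [mem_coe, mem_Icc] at ha hb
  refine Nat.ModEq.eq_of_abs_lt ((ZMod.natCast_eq_natCast_iff a b p).1 hab) ?_
  rw [abs_lt]
  omega

lemma quadCharSum_eq_sum_image {K : ℕ} (hK : K ≤ p) (y : ZMod p) :
    quadCharSum p K y = ∑ c ∈ (Icc 1 K).image (fun k : ℕ => (k : ZMod p)), quadChar p (y + c) :=
  (sum_image (f := fun c => quadChar p (y + c)) (injOn_natCast_Icc hK)).symm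

lemma quadCharSum_self (hp : p ≠ 2) (y : ZMod p) : quadCharSum p p y = 0 := by
  have huniv : (Icc 1 p).image (fun k : ℕ => (k : ZMod p)) = univ := by
    rw [← card_eq_iff_eq_univ, card_image_of_injOn (injOn_natCast_Icc le_rfl)]
    simp [ZMod.card]
  rw [quadCharSum_eq_sum_image le_rfl, huniv,
    Fintype.sum_equiv (Equiv.addLeft y) (fun c => quadChar p (y + c)) (quadChar p) fun _ => rfl]
  have hsum := quadraticChar_sum_zero (F := ZMod p) (by rwa [ZMod.ringChar_zmod_n])
  simp only [quadChar_apply]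
  exact_mod_cast hsum

lemma abs_quadCharSum_le_prime (hp : p ≠ 2) (K : ℕ) (y : ZMod p) : |quadCharSum p K y| ≤ p := by
  have hper : Function.Periodic (quadCharSum p · y) p := fun K => by
    simp only [quadCharSum_add, quadCharSum_self hp, add_zero]
  rw [← hper.map_mod_nat K]
  exact (abs_quadCharSum_le _ _).trans
    (by exact_mod_cast (Nat.mod_lt K (Fact.out : p.Prime).pos).le)

lemma card_largeSumSet_le {s B : ℕ} {δ : ℝ} (hs : 0 < s) (hB : 0 < B) (hBp : B ≤ p)
    (hBs : √p ≤ (B : ℝ) ^ s) (hδ : 0 < δ) :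
    (#(largeSumSet p B δ) : ℝ) ≤ (s ^ (2 * s) + 122 * s) / δ ^ (2 * s) * √p := by
  have hB0 : (0 : ℝ) < B := by exact_mod_cast hB
  have hmoment : ∑ x : ZMod p, quadCharSum p B x ^ (2 * s) ≤
      s ^ (2 * s) * (B : ℝ) ^ s * p + 122 * s * (B : ℝ) ^ (2 * s) * √p := by
    have h := sum_sum_quadChar_pow_le hs ((Icc 1 B).image fun k : ℕ => (k : ZMod p))
    rw [card_image_of_injOn (injOn_natCast_Icc hBp), Nat.card_Icc, Nat.add_sub_cancel] at h
    simpa only [← quadCharSum_eq_sum_image hBp] using h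
  have hlarge : #(largeSumSet p B δ) * (δ * B) ^ (2 * s) ≤
      ∑ x : ZMod p, quadCharSum p B x ^ (2 * s) := by
    rw [← nsmul_eq_mul]
    refine (card_nsmul_le_sum _ _ _ fun x hx => ?_).trans <|
      sum_le_sum_of_subset_of_nonneg (subset_univ (largeSumSet p B δ))
        fun x _ _ => (even_two_mul s).pow_nonneg _
    rw [← (even_two_mul s).pow_abs (quadCharSum p B x)]
    gcongr
    exact mem_largeSumSet.1 hx
  have hdiag : (B : ℝ) ^ s * p ≤ (B : ℝ) ^ (2 * s) * √p := by
    calc (B : ℝ) ^ s * p = (B : ℝ) ^ s * √p * √p := by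
          rw [mul_assoc, Real.mul_self_sqrt (Nat.cast_nonneg p)]
      _ ≤ (B : ℝ) ^ s * (B : ℝ) ^ s * √p := by gcongr
      _ = (B : ℝ) ^ (2 * s) * √p := by rw [two_mul, pow_add]
  rw [div_mul_eq_mul_div, le_div_iff₀ (by positivity)]
  refine le_of_mul_le_mul_right ?_ (pow_pos hB0 (2 * s))
  calc (#(largeSumSet p B δ) : ℝ) * δ ^ (2 * s) * B ^ (2 * s)
      = #(largeSumSet p B δ) * (δ * B) ^ (2 * s) := by rw [mul_pow, mul_assoc]
    _ ≤ s ^ (2 * s) * ((B : ℝ) ^ s * p) + 122 * s * (B : ℝ) ^ (2 * s) * √p := by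
        linarith
    _ ≤ s ^ (2 * s) * ((B : ℝ) ^ (2 * s) * √p) + 122 * s * (B : ℝ) ^ (2 * s) * √p := by gcongr
    _ = (s ^ (2 * s) + 122 * s) * √p * (B : ℝ) ^ (2 * s) := by ring

lemma sum_quadCharSum_add_mul {a : ZMod p} (ha : a ≠ 0) (B K : ℕ) (y : ZMod p) :
    ∑ b ∈ Icc 1 B, quadCharSum p K (y + a * b) =
      quadChar p a * ∑ k ∈ Icc 1 K, quadCharSum p B ((y + k) / a) := by
  simp only [quadCharSum, mul_sum]
  rw [sum_comm]
  refine sum_congr rfl fun k _ => sum_congr rfl fun b _ => ?_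
  rw [← map_mul]
  congr 1
  field_simp
  ring

lemma mul_le_abs_sum_quadCharSum {K B a : ℕ} {δ : ℝ} {y : ZMod p}
    (haB : (a : ℝ) * B ≤ δ * K / 4) (hy : y ∈ largeSumSet p K δ) :
    B * (δ * K / 2) ≤ |∑ b ∈ Icc 1 B, quadCharSum p K (y + a * b)| := by
  have hshift : |∑ b ∈ Icc 1 B, (quadCharSum p K (y + a * b) - quadCharSum p K y)| ≤
      B * (δ * K / 2) := by
    refine (abs_sum_le_sum_abs _ _).trans ?_
    refine (sum_le_card_nsmul _ _ (δ * K / 2) fun b hb => ?_).trans_eq (by simp)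
    have hbB : (b : ℝ) ≤ B := by exact_mod_cast (mem_Icc.1 hb).2
    calc |quadCharSum p K (y + a * b) - quadCharSum p K y| ≤ 2 * (a * b) := by
          simpa using abs_quadCharSum_add_sub_le K (a * b) y
      _ ≤ 2 * (a * B) := by gcongr
      _ ≤ δ * K / 2 := by linarith
  have hlarge : (B : ℝ) * (δ * K) ≤ |B * quadCharSum p K y| := by
    rw [abs_mul, Nat.abs_cast]
    gcongr
    exact mem_largeSumSet.1 hy
  rw [sum_sub_distrib, sum_const, Nat.card_Icc, Nat.add_sub_cancel, nsmul_eq_mul,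
    abs_sub_comm] at hshift
  linarith [(abs_sub_abs_le_abs_sub _ _).trans hshift]

lemma sum_abs_quadCharSum_le {ι : Type*} (I : Finset ι) (z : ι → ZMod p) (B : ℕ) {δ : ℝ}
    (hδ : 0 ≤ δ) :
    ∑ i ∈ I, |quadCharSum p B (z i)| ≤ B * (δ * #I + #{i ∈ I | z i ∈ largeSumSet p B δ}) := by
  calc ∑ i ∈ I, |quadCharSum p B (z i)|
      ≤ ∑ i ∈ I, (δ * B + if z i ∈ largeSumSet p B δ then (B : ℝ) else 0) := by
        refine sum_le_sum fun i _ => ?_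
        split_ifs with h
        · exact (abs_quadCharSum_le B _).trans (le_add_of_nonneg_left (by positivity))
        · rw [mem_largeSumSet, not_le] at h
          simpa using h.le
    _ = B * (δ * #I + #{i ∈ I | z i ∈ largeSumSet p B δ}) := by
        rw [sum_add_distrib, ← sum_filter, sum_const, sum_const, nsmul_eq_mul, nsmul_eq_mul]
        ring

/-- Averaging over the shifts `k ↦ k + a * b` with `b ≤ B` transfers a large character sum of
length `K` to many large character sums of length `B`. -/
lemma le_card_filter_div_mem_largeSumSet {K B a : ℕ} {δ : ℝ} {y : ZMod p} (ha : (a : ZMod p) ≠ 0)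
    (hB : 0 < B) (haB : (a : ℝ) * B ≤ δ * K / 4) (hδ : 0 ≤ δ) (hy : y ∈ largeSumSet p K δ) :
    δ * K / 4 ≤ #{k ∈ Icc 1 K | (y + (k : ℕ)) / (a : ZMod p) ∈ largeSumSet p B (δ / 4)} := by
  set good := {k ∈ Icc 1 K | (y + (k : ℕ)) / (a : ZMod p) ∈ largeSumSet p B (δ / 4)}
  have hupper : |∑ b ∈ Icc 1 B, quadCharSum p K (y + a * b)| ≤ B * (δ / 4 * K + #good) := by
    rw [sum_quadCharSum_add_mul ha, abs_mul]
    refine (mul_le_of_le_one_left (abs_nonneg _) (abs_quadChar_le_one _)).trans ?_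
    refine (abs_sum_le_sum_abs _ _).trans ?_
    simpa using sum_abs_quadCharSum_le (p := p) (δ := δ / 4) (Icc 1 K) (fun k => (y + k) / a) B
      (by positivity)
  have hmain := (mul_le_abs_sum_quadCharSum haB hy).trans hupper
  linarith [le_of_mul_le_mul_left hmain (by exact_mod_cast hB)]

end ShortSums

section Counting

lemma sq_card_filter_mem_le {α β : Type*} [DecidableEq β] (s : Finset α) (f : α → β)
    (L : Finset β) :
    #{a ∈ s | f a ∈ L} ^ 2 ≤ #L * #{q ∈ s ×ˢ s | f q.1 = f q.2} := by
  have hfiber : #{a ∈ s | f a ∈ L} = ∑ c ∈ L, #{a ∈ s | f a = c} := by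
    refine (card_eq_sum_card_fiberwise fun a ha => (mem_filter.1 ha).2).trans
      (sum_congr rfl fun c hc => congrArg card ?_)
    rw [filter_filter]
    exact filter_congr fun a _ => ⟨And.right, fun h => ⟨h ▸ hc, h⟩⟩
  have hpairs : ∑ c ∈ L, #{a ∈ s | f a = c} ^ 2 ≤ #{q ∈ s ×ˢ s | f q.1 = f q.2} := by
    simp_rw [sq, ← card_product]
    rw [← card_sigma]
    refine card_le_card_of_injOn Sigma.snd (fun q hq => ?_) fun q hq q' hq' h => ?_
    · simp only [mem_coe, mem_sigma, mem_product, mem_filter] at hq ⊢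
      exact ⟨⟨hq.2.1.1, hq.2.2.1⟩, hq.2.1.2.trans hq.2.2.2.symm⟩
    · simp only [mem_coe, mem_sigma, mem_product, mem_filter] at hq hq'
      exact Sigma.ext (by rw [← hq.2.1.2, ← hq'.2.1.2, h]) (heq_of_eq h)
  rw [hfiber]
  exact sq_sum_le_card_mul_sum_sq.trans (Nat.mul_le_mul_left _ hpairs)

lemma card_filter_add_mem_le {α : Type*} [AddCancelCommMonoid α] [DecidableEq α]
    (X T S : Finset α) :
    #{q ∈ X ×ˢ T | q.1 + q.2 ∈ S} ≤ min #X #T * #S := by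
  refine card_le_mul_card_image_of_maps_to (f := fun q : α × α => q.1 + q.2)
    (fun q hq => (mem_filter.1 hq).2) _ fun z _ => le_min ?_ ?_
  · refine card_le_card_of_injOn Prod.fst (fun q hq => ?_) fun q hq q' hq' h => ?_
    · exact (mem_product.1 (mem_filter.1 (mem_filter.1 hq).1).1).1
    · have hsum := (mem_filter.1 hq).2.trans (mem_filter.1 hq').2.symm
      rw [h] at hsum
      exact Prod.ext h (add_left_cancel hsum)
  · refine card_le_card_of_injOn Prod.snd (fun q hq => ?_) fun q hq q' hq' h => ?_
    · exact (mem_product.1 (mem_filter.1 (mem_filter.1 hq).1).1).2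
    · have hsum := (mem_filter.1 hq).2.trans (mem_filter.1 hq').2.symm
      rw [h] at hsum
      exact Prod.ext (add_right_cancel hsum) h

lemma card_filter_mul_mem_le {ι : Type*} {s : Finset ι} {u v : ι → ℕ} {T : Finset ℕ} {D : ℕ}
    (hinj : Set.InjOn (fun i => (u i, v i)) s) (hT : 0 ∉ T) (hD : ∀ n ∈ T, #n.divisors ≤ D) :
    #{i ∈ s | u i * v i ∈ T} ≤ D * #T := by
  refine card_le_mul_card_image_of_maps_to (f := fun i => u i * v i)
    (fun i hi => (mem_filter.1 hi).2) _ fun n hn => le_trans ?_ (hD n hn)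
  have hn0 : n ≠ 0 := ne_of_mem_of_not_mem hn hT
  refine card_le_card_of_injOn u (fun i hi => ?_) fun i hi j hj h => ?_
  · exact Nat.mem_divisors.2 ⟨⟨v i, (mem_filter.1 hi).2.symm⟩, hn0⟩
  · simp only [mem_coe, mem_filter] at hi hj
    have hu : 0 < u i := Nat.pos_of_ne_zero fun h0 => hn0 (by rw [← hi.2, h0, zero_mul])
    have huv : u i * v i = u i * v j := by rw [hi.2, h, hj.2]
    exact hinj hi.1.1 hj.1.1 (Prod.ext h (Nat.eq_of_mul_eq_mul_left hu huv))

lemma card_filter_natCast_eq_le {p : ℕ} [NeZero p] (X : ℕ) (w : ZMod p) :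
    #{v ∈ Icc 1 X | ((v : ℕ) : ZMod p) = w} ≤ X / p + 1 := by
  rw [← card_range (X / p + 1)]
  refine card_le_card_of_injOn (· / p) (fun v hv => ?_) fun v hv v' hv' h => ?_
  · rw [mem_coe, mem_filter, mem_Icc] at hv
    exact mem_coe.2 (mem_range.2 (Nat.lt_succ_of_le (Nat.div_le_div_right hv.1.2)))
  · have hmod := (ZMod.natCast_eq_natCast_iff' v v' p).1
      ((mem_filter.1 hv).2.trans (mem_filter.1 hv').2.symm)
    rw [← Nat.div_add_mod' v p, ← Nat.div_add_mod' v' p, hmod, show v / p = v' / p from h]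

variable {p : ℕ} [Fact p.Prime]

/-- Clear denominators: `n₁ / a₁ = n₂ / a₂` becomes `n₁ * a₂ = n₂ * a₁`, and for given `n₁` and
`a₂` the integer `n₂ * a₁` runs through a residue class modulo `p`. -/
lemma card_filter_div_eq_div_le {Z A D : ℕ} (hA : A < p)
    (hD : ∀ n ∈ Icc 1 (Z * A), #n.divisors ≤ D) :
    #{q ∈ (Icc 1 Z ×ˢ Icc 1 A) ×ˢ (Icc 1 Z ×ˢ Icc 1 A) |
        (q.1.1 / q.1.2 : ZMod p) = q.2.1 / q.2.2} ≤ D * (Z * A / p + 1) * (Z * A) := by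
  set s := Icc 1 Z ×ˢ Icc 1 A
  have hs : #s = Z * A := by simp [s]
  have hunit : ∀ q ∈ s, (q.2 : ZMod p) ≠ 0 := fun q hq =>
    natCast_ne_zero_of_mem_Icc hA (mem_product.1 hq).2
  refine (card_le_mul_card_image_of_maps_to (f := fun q => (q.1.1, q.2.2)) (t := s)
    (fun q hq => ?_) _ fun c _ => ?_).trans_eq (congrArg _ hs)
  · simp only [s, mem_filter, mem_product] at hq ⊢
    exact ⟨hq.1.1.1, hq.1.2.2⟩
  rw [filter_filter]
  set F := {q ∈ s ×ˢ s | (q.1.1 / q.1.2 : ZMod p) = q.2.1 / q.2.2 ∧ (q.1.1, q.2.2) = c} with hF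
  set V := {v ∈ Icc 1 (Z * A) | ((v : ℕ) : ZMod p) = c.1 * c.2}
  have hsub : F ⊆ {q ∈ F | q.2.1 * q.1.2 ∈ V} := by
    intro q hq
    refine mem_filter.2 ⟨hq, ?_⟩
    obtain ⟨hqs, hdiv, rfl⟩ := mem_filter.1 hq
    obtain ⟨h1, h2⟩ := mem_product.1 hqs
    rw [div_eq_div_iff (hunit _ h1) (hunit _ h2)] at hdiv
    simp only [s, mem_product, mem_Icc] at h1 h2
    refine mem_filter.2 ⟨mem_Icc.2 ⟨Nat.mul_pos h2.1.1 h1.2.1, Nat.mul_le_mul h2.1.2 h1.2.2⟩, ?_⟩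
    push_cast
    exact hdiv.symm
  refine (card_le_card hsub).trans ?_
  refine (card_filter_mul_mem_le ?_ (by simp) fun n hn => hD n (mem_filter.1 hn).1).trans
    (Nat.mul_le_mul_left _ (card_filter_natCast_eq_le _ _))
  intro q hq q' hq' h
  have hc := (mem_filter.1 hq).2.2.trans (mem_filter.1 hq').2.2.symm
  simp only [Prod.mk.injEq] at h hc
  ext <;> simp [h, hc]

end Counting

section BadPoints

variable {p : ℕ} [Fact p.Prime]

/-- The integers `1 ≤ x ≤ Y` that are followed by a large short character sum. -/
noncomputable def badPoints (p : ℕ) [Fact p.Prime] (K Y : ℕ) (δ : ℝ) : Finset ℕ :=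
  {x ∈ Icc 1 Y | ((x : ℕ) : ZMod p) ∈ largeSumSet p K δ}

lemma mem_badPoints {K Y : ℕ} {δ : ℝ} {x : ℕ} :
    x ∈ badPoints p K Y δ ↔ x ∈ Icc 1 Y ∧ (x : ZMod p) ∈ largeSumSet p K δ :=
  mem_filter

lemma badPoints_eq_empty {K : ℕ} {δ : ℝ} (hp : p ≠ 2) (hK : p < δ * K) (Y : ℕ) :
    badPoints p K Y δ = ∅ := by
  refine eq_empty_of_forall_notMem fun x hx => ?_
  exact ((mem_largeSumSet.1 (mem_badPoints.1 hx).2).trans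
    (abs_quadCharSum_le_prime hp K x)).not_gt hK

lemma card_badPoints_mul_le {K B a : ℕ} {δ : ℝ} (Y : ℕ) (ha : (a : ZMod p) ≠ 0) (hB : 0 < B)
    (haB : (a : ℝ) * B ≤ δ * K / 4) (hδ : 0 ≤ δ) :
    #(badPoints p K Y δ) * (δ * K / 4) ≤
      (min Y K : ℕ) * #{z ∈ Icc 1 (Y + K) | ((z : ℕ) / a : ZMod p) ∈ largeSumSet p B (δ / 4)} := by
  set bad := badPoints p K Y δ
  set S := {z ∈ Icc 1 (Y + K) | ((z : ℕ) / a : ZMod p) ∈ largeSumSet p B (δ / 4)}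
  have hlower : #bad * (δ * K / 4) ≤ #{q ∈ bad ×ˢ Icc 1 K | q.1 + q.2 ∈ S} := by
    rw [card_filter, sum_product, Nat.cast_sum, ← nsmul_eq_mul]
    refine card_nsmul_le_sum _ _ _ fun x hx => ?_
    rw [← card_filter]
    rw [mem_badPoints, mem_Icc] at hx
    refine (le_card_filter_div_mem_largeSumSet ha hB haB hδ hx.2).trans ?_
    gcongr with k hk
    intro hdiv
    rw [mem_Icc] at hk
    refine mem_filter.2 ⟨mem_Icc.2 ⟨by omega, by omega⟩, ?_⟩
    push_cast
    exact hdiv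
  have hupper : #{q ∈ bad ×ˢ Icc 1 K | q.1 + q.2 ∈ S} ≤ min Y K * #S := by
    refine (card_filter_add_mem_le bad (Icc 1 K) S).trans ?_
    gcongr
    · exact (card_filter_le _ _).trans_eq (by simp)
    · simp
  exact hlower.trans (by exact_mod_cast hupper)

lemma card_badPoints_mul_mul_le {K Y A B : ℕ} {δ : ℝ} (hK : 0 < K) (hA : A < p) (hB : 0 < B)
    (hAB : (A : ℝ) * B ≤ δ * K / 4) (hδ : 0 ≤ δ) :
    #(badPoints p K Y δ) * (δ / 8 * ((Y + K : ℕ) * A)) ≤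
      Y * #{q ∈ Icc 1 (Y + K) ×ˢ Icc 1 A | (q.1 / q.2 : ZMod p) ∈ largeSumSet p B (δ / 4)} := by
  set L := largeSumSet p B (δ / 4)
  set G := {q ∈ Icc 1 (Y + K) ×ˢ Icc 1 A | (q.1 / q.2 : ZMod p) ∈ L}
  have hG : #G = ∑ a ∈ Icc 1 A, #{z ∈ Icc 1 (Y + K) | ((z : ℕ) / a : ZMod p) ∈ L} := by
    simp only [G, card_filter, sum_product_right]
  have hsum : #(badPoints p K Y δ) * (δ * K / 4) * A ≤ (min Y K : ℕ) * #G := by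
    have hterm := sum_le_sum fun a (ha : a ∈ Icc 1 A) =>
      card_badPoints_mul_le (p := p) (K := K) Y (natCast_ne_zero_of_mem_Icc hA ha) hB
        (le_trans (by gcongr; exact (mem_Icc.1 ha).2) hAB) hδ
    rw [sum_const, Nat.card_Icc, Nat.add_sub_cancel, nsmul_eq_mul, ← mul_sum, ← Nat.cast_sum,
      ← hG] at hterm
    rwa [mul_comm]
  have hmin : min Y K * (Y + K) ≤ 2 * (Y * K) := by
    rw [← min_mul_max Y K, two_mul, ← mul_add]
    exact Nat.mul_le_mul_left _ (by omega)
  refine le_of_mul_le_mul_left ?_ (by exact_mod_cast hK : (0 : ℝ) < K)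
  calc K * (#(badPoints p K Y δ) * (δ / 8 * ((Y + K : ℕ) * A)))
      = #(badPoints p K Y δ) * (δ * K / 4) * A * (Y + K : ℕ) / 2 := by ring
    _ ≤ (min Y K : ℕ) * #G * (Y + K : ℕ) / 2 := by gcongr
    _ = (min Y K * (Y + K) : ℕ) * #G / 2 := by push_cast; ring
    _ ≤ (2 * (Y * K) : ℕ) * #G / 2 := by gcongr
    _ = K * (Y * #G) := by push_cast; ring

lemma sq_card_badPoints_mul_le {K Y A B D : ℕ} {δ : ℝ} (hK : 0 < K) (hA : 0 < A) (hAp : A < p)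
    (hB : 0 < B) (hAB : (A : ℝ) * B ≤ δ * K / 4) (hδ : 0 ≤ δ)
    (hD : ∀ n ∈ Icc 1 ((Y + K) * A), #n.divisors ≤ D) :
    (#(badPoints p K Y δ) : ℝ) ^ 2 * (δ ^ 2 / 64 * ((Y + K : ℕ) * A)) ≤
      Y ^ 2 * (#(largeSumSet p B (δ / 4)) * (D * ((Y + K : ℕ) * A / p + 1))) := by
  set W : ℝ := (Y + K : ℕ) * A with hW
  have hW0 : 0 < W := by positivity
  set L := largeSumSet p B (δ / 4)
  set G := {q ∈ Icc 1 (Y + K) ×ˢ Icc 1 A | (q.1 / q.2 : ZMod p) ∈ L}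
  have hG : (#G : ℝ) ^ 2 ≤ #L * (D * (W / p + 1) * W) := by
    have hfloor : (((Y + K) * A / p : ℕ) : ℝ) ≤ W / p := by
      simpa [hW] using Nat.cast_div_le (α := ℝ) (m := (Y + K) * A) (n := p)
    calc (#G : ℝ) ^ 2 ≤ #L * (D * (((Y + K) * A / p : ℕ) + 1) * W) := by
          rw [hW]
          exact_mod_cast (sq_card_filter_mem_le _ _ L).trans
            (Nat.mul_le_mul_left _ (card_filter_div_eq_div_le hAp hD))
      _ ≤ #L * (D * (W / p + 1) * W) := by gcongr
  refine le_of_mul_le_mul_right ?_ hW0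
  calc (#(badPoints p K Y δ) : ℝ) ^ 2 * (δ ^ 2 / 64 * W) * W
      = (#(badPoints p K Y δ) * (δ / 8 * W)) ^ 2 := by ring
    _ ≤ (Y * #G : ℝ) ^ 2 :=
        pow_le_pow_left₀ (by positivity) (card_badPoints_mul_mul_le hK hAp hB hAB hδ) 2
    _ = Y ^ 2 * (#G : ℝ) ^ 2 := mul_pow _ _ _
    _ ≤ Y ^ 2 * (#L * (D * (W / p + 1) * W)) := by gcongr
    _ = Y ^ 2 * (#L * (D * (W / p + 1))) * W := by ring

end BadPoints

section BadPointsAsymptotics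

open Filter

lemma exists_natCast_mul_mem_Icc {t : ℝ} {B : ℕ} (hB : 0 < B) (hBt : B ≤ t) :
    ∃ A : ℕ, 0 < A ∧ (A * B : ℝ) ∈ Set.Icc (t / 2) t := by
  have hB0 : (0 : ℝ) < B := by exact_mod_cast hB
  have hquot : 1 ≤ t / B := (one_le_div hB0).2 hBt
  refine ⟨⌊t / B⌋₊, Nat.floor_pos.2 hquot, ?_, ?_⟩
  · have h := (Nat.div_two_lt_floor hquot).le
    rwa [div_right_comm, div_le_iff₀ hB0] at h
  · rw [← le_div_iff₀ hB0]
    exact Nat.floor_le (by linarith)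

lemma sqrt_le_natFloor_rpow_pow {x η : ℝ} {s : ℕ} (hη : 0 ≤ η) (hx : 1 ≤ x)
    (hx2 : 2 ≤ x ^ (η / 4)) (hs : 2 ≤ η * s) : √x ≤ (⌊x ^ (η / 2)⌋₊ : ℝ) ^ s := by
  have hx0 : 0 < x := by linarith
  have hhalf : x ^ (η / 4) * x ^ (η / 4) = x ^ (η / 2) := by
    rw [← Real.rpow_add hx0]
    ring_nf
  have hfloor : x ^ (η / 4) ≤ ⌊x ^ (η / 2)⌋₊ := by
    refine le_trans ?_ (Nat.div_two_lt_floor (Real.one_le_rpow hx (by positivity))).le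
    rw [le_div_iff₀ two_pos, ← hhalf]
    gcongr
  calc √x = x ^ (1 / 2 : ℝ) := Real.sqrt_eq_rpow _
    _ ≤ x ^ (η / 4 * s) := Real.rpow_le_rpow_of_exponent_le hx (by linarith)
    _ = (x ^ (η / 4)) ^ s := by rw [Real.rpow_mul hx0.le, Real.rpow_natCast]
    _ ≤ (⌊x ^ (η / 2)⌋₊ : ℝ) ^ s := by gcongr

lemma eventually_exists_shift_lengths {η δ : ℝ} {s : ℕ} (hη : 0 < η) (hη2 : η ≤ 2) (hδ : 0 < δ)
    (hs : 2 ≤ η * s) :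
    ∀ᶠ p : ℕ in atTop, ∀ K : ℕ, (p : ℝ) ^ η ≤ K → δ * K ≤ p → ∃ A B : ℕ,
      (0 < A ∧ A < p) ∧ (0 < B ∧ B ≤ p) ∧ √p ≤ (B : ℝ) ^ s ∧ (A : ℝ) * B ≤ δ * K / 4 ∧
        δ * K / 8 ≤ A * (p : ℝ) ^ (η / 2) := by
  filter_upwards [eventually_le_natCast_rpow 2 (by positivity : 0 < η / 4),
    eventually_le_natCast_rpow (4 / δ) (half_pos hη), eventually_ge_atTop 1]
    with p hp2 hpδ hp K hK hKp
  have hp1 : (1 : ℝ) ≤ p := by exact_mod_cast hp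
  have hp0 : (0 : ℝ) < p := by linarith
  have hθ : 1 ≤ (p : ℝ) ^ (η / 2) := Real.one_le_rpow hp1 (by positivity)
  have hBs := sqrt_le_natFloor_rpow_pow hη.le hp1 hp2 hs
  set B := ⌊(p : ℝ) ^ (η / 2)⌋₊
  have hB0 : 0 < B := Nat.floor_pos.2 hθ
  have hB : (B : ℝ) ≤ (p : ℝ) ^ (η / 2) := Nat.floor_le (by positivity)
  have hBp : (B : ℝ) ≤ p := hB.trans (Real.rpow_le_self_of_one_le hp1 (by linarith))
  have hBK : (B : ℝ) ≤ δ * K / 4 := by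
    rw [div_le_iff₀ hδ] at hpδ
    rw [le_div_iff₀' four_pos]
    calc (4 * B : ℝ) ≤ (p : ℝ) ^ (η / 2) * δ * (p : ℝ) ^ (η / 2) := by gcongr
      _ = δ * (p : ℝ) ^ η := by
          rw [mul_right_comm, ← Real.rpow_add hp0, add_halves, mul_comm]
      _ ≤ δ * K := by gcongr
  obtain ⟨A, hA0, hAlow, hAup⟩ := exists_natCast_mul_mem_Icc hB0 hBK
  have hAp : (A : ℝ) < p := by
    have hA1 : (A : ℝ) ≤ A * B := le_mul_of_one_le_right (by positivity) (by exact_mod_cast hB0)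
    linarith
  refine ⟨A, B, ⟨hA0, by exact_mod_cast hAp⟩, ⟨hB0, by exact_mod_cast hBp⟩, hBs, hAup, ?_⟩
  calc δ * K / 8 = δ * K / 4 / 2 := by ring
    _ ≤ A * B := hAlow
    _ ≤ A * (p : ℝ) ^ (η / 2) := by gcongr

lemma mul_rpow_le_mul_of_rpow_le_mul {x η c K Y A : ℝ} (hx : 0 < x) (hc : 0 ≤ c) (hY : 0 ≤ Y)
    (hKY : x ^ (1 / 2 + η) ≤ K * Y) (hA : c * K ≤ A * x ^ (η / 2)) :
    c * x ^ (1 / 2 + η / 2) ≤ Y * A := by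
  refine le_of_mul_le_mul_right ?_ (by positivity : 0 < x ^ (η / 2))
  calc c * x ^ (1 / 2 + η / 2) * x ^ (η / 2) = c * x ^ (1 / 2 + η) := by
        rw [mul_assoc, ← Real.rpow_add hx, add_assoc, add_halves]
    _ ≤ c * (K * Y) := by gcongr
    _ = Y * (c * K) := by ring
    _ ≤ Y * (A * x ^ (η / 2)) := by gcongr
    _ = Y * A * x ^ (η / 2) := by ring

lemma add_mul_le_rpow_add_two {x δ E K Y A : ℝ} (hδ : 0 < δ) (hx : 2 + 1 / δ ≤ x) (hE : 2 ≤ E)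
    (hK : δ * K ≤ x) (hY : Y ≤ x ^ E) (hA : 0 ≤ A) (hAx : A ≤ x) :
    (Y + K) * A ≤ x ^ (E + 2) := by
  have hδ1 : 0 < 1 / δ := by positivity
  have hx0 : 0 < x := by linarith
  have hKE : K ≤ x ^ E := by
    calc K ≤ x * (1 / δ) := by rw [mul_one_div]; exact (le_div_iff₀' hδ).2 hK
      _ ≤ x * x := by gcongr; linarith
      _ = x ^ (2 : ℝ) := by rw [Real.rpow_two, sq]
      _ ≤ x ^ E := Real.rpow_le_rpow_of_exponent_le (by linarith) hE
  calc (Y + K) * A ≤ (x ^ E + x ^ E) * x := by gcongr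
    _ = x ^ E * (2 * x) := by ring
    _ ≤ x ^ E * (x * x) := by gcongr; linarith
    _ = x ^ (E + 2) := by rw [Real.rpow_add hx0, Real.rpow_two, sq]

lemma sqrt_mul_rpow_mul_le {x W c ε : ℝ} (hx : 1 ≤ x) (hε : 0 ≤ ε) (hε8 : 8 * ε ≤ 1) (hc : 0 < c)
    (hW : c * x ^ (1 / 2 + 8 * ε) ≤ W) :
    √x * (x ^ ε * (W / x + 1)) ≤ (1 + 1 / c) * W * x ^ (-(3 * ε)) := by
  have hx0 : 0 < x := by linarith
  have hW0 : 0 ≤ W := le_trans (by positivity) hW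
  have hsplit : √x * (x ^ ε * (W / x + 1)) = W * x ^ (-(1 / 2) + ε) + x ^ (1 / 2 + ε) := by
    rw [show -(1 / 2) + ε = 1 / 2 + ε - 1 by ring, Real.rpow_sub_one hx0.ne', Real.sqrt_eq_rpow,
      Real.rpow_add hx0]
    ring
  have hfirst : W * x ^ (-(1 / 2) + ε) ≤ W * x ^ (-(3 * ε)) := by
    gcongr
    linarith
  have hsecond : x ^ (1 / 2 + ε) ≤ W / c * x ^ (-(3 * ε)) := by
    calc x ^ (1 / 2 + ε) ≤ x ^ (1 / 2 + 8 * ε + -(3 * ε)) :=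
          Real.rpow_le_rpow_of_exponent_le hx (by linarith)
      _ = x ^ (1 / 2 + 8 * ε) * x ^ (-(3 * ε)) := Real.rpow_add hx0 _ _
      _ ≤ W / c * x ^ (-(3 * ε)) := by
          gcongr
          rwa [le_div_iff₀' hc]
  rw [hsplit]
  calc W * x ^ (-(1 / 2) + ε) + x ^ (1 / 2 + ε)
      ≤ W * x ^ (-(3 * ε)) + W / c * x ^ (-(3 * ε)) := add_le_add hfirst hsecond
    _ = (1 + 1 / c) * W * x ^ (-(3 * ε)) := by ring

lemma sq_card_badPoints_le {p s K Y A B : ℕ} [Fact p.Prime] {δ ε : ℝ} (hs : 0 < s) (hδ : 0 < δ)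
    (hε : 0 ≤ ε) (hε8 : 8 * ε ≤ 1) (hK : 0 < K) (hA : 0 < A) (hAp : A < p) (hB : 0 < B)
    (hBp : B ≤ p) (hBs : √p ≤ (B : ℝ) ^ s) (hAB : (A : ℝ) * B ≤ δ * K / 4)
    (hD : ∀ n ∈ Icc 1 ((Y + K) * A), (#n.divisors : ℝ) ≤ (p : ℝ) ^ ε)
    (hW : δ / 8 * (p : ℝ) ^ (1 / 2 + 8 * ε) ≤ (Y + K : ℕ) * A) :
    (#(badPoints p K Y δ) : ℝ) ^ 2 ≤ 64 / δ ^ 2 * ((s ^ (2 * s) + 122 * s) / (δ / 4) ^ (2 * s)) *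
      (1 + 1 / (δ / 8)) * (p : ℝ) ^ (-(3 * ε)) * Y ^ 2 := by
  set CL : ℝ := (s ^ (2 * s) + 122 * s) / (δ / 4) ^ (2 * s)
  set W : ℝ := (Y + K : ℕ) * A
  have hW0 : 0 < W := by positivity
  have hp1 : (1 : ℝ) ≤ p := by exact_mod_cast (Fact.out : p.Prime).one_le
  refine le_of_mul_le_mul_right ?_ (by positivity : 0 < δ ^ 2 / 64 * W)
  calc (#(badPoints p K Y δ) : ℝ) ^ 2 * (δ ^ 2 / 64 * W)
      ≤ Y ^ 2 * (#(largeSumSet p B (δ / 4)) * (⌊(p : ℝ) ^ ε⌋₊ * (W / p + 1))) :=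
        sq_card_badPoints_mul_le hK hA hAp hB hAB hδ.le fun n hn => Nat.le_floor (hD n hn)
    _ ≤ Y ^ 2 * (CL * √p * ((p : ℝ) ^ ε * (W / p + 1))) := by
        gcongr
        · exact card_largeSumSet_le hs hB hBp hBs (by positivity)
        · exact Nat.floor_le (by positivity)
    _ = Y ^ 2 * CL * (√p * ((p : ℝ) ^ ε * (W / p + 1))) := by ring
    _ ≤ Y ^ 2 * CL * ((1 + 1 / (δ / 8)) * W * (p : ℝ) ^ (-(3 * ε))) := by
        gcongr Y ^ 2 * CL * ?_
        exact sqrt_mul_rpow_mul_le hp1 hε hε8 (by positivity) hW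
    _ = 64 / δ ^ 2 * CL * (1 + 1 / (δ / 8)) * (p : ℝ) ^ (-(3 * ε)) * Y ^ 2 *
          (δ ^ 2 / 64 * W) := by
        field_simp

lemma eventually_sq_card_badPoints_le {η δ E : ℝ} (hη : 0 < η) (hη2 : η ≤ 2) (hδ : 0 < δ)
    (hE : 2 ≤ E) :
    ∃ C : ℝ, ∀ᶠ p : ℕ in atTop, ∀ [Fact p.Prime] (K Y : ℕ), (p : ℝ) ^ η ≤ K → δ * K ≤ p →
      (p : ℝ) ^ (1 / 2 + η) ≤ K * Y → (Y : ℝ) ≤ (p : ℝ) ^ E →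
      (#(badPoints p K Y δ) : ℝ) ^ 2 ≤ C * (p : ℝ) ^ (-(3 * (η / 16))) * Y ^ 2 := by
  set s := ⌈2 / η⌉₊
  have hs : 0 < s := Nat.ceil_pos.2 (by positivity)
  have hηs : 2 ≤ η * s := (div_le_iff₀' hη).1 (Nat.le_ceil _)
  refine ⟨64 / δ ^ 2 * ((s ^ (2 * s) + 122 * s) / (δ / 4) ^ (2 * s)) * (1 + 1 / (δ / 8)), ?_⟩
  filter_upwards [eventually_exists_shift_lengths hη hη2 hδ hηs,
    eventually_card_divisors_le_rpow (E + 2) (ε := η / 16) (by positivity),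
    eventually_le_natCast_rpow (2 + 1 / δ) one_pos, eventually_ge_atTop 1]
    with p hshift hdiv hpδ hp _ K Y hK hKp hKY hY
  rw [Real.rpow_one] at hpδ
  obtain ⟨A, B, ⟨hA, hAp⟩, ⟨hB, hBp⟩, hBs, hAB, hAlow⟩ := hshift K hK hKp
  have hp0 : (0 : ℝ) < p := by exact_mod_cast hp
  have hK0 : (0 : ℝ) < K := lt_of_lt_of_le (by positivity) hK
  have hWlow : δ / 8 * (p : ℝ) ^ (1 / 2 + 8 * (η / 16)) ≤ (Y + K : ℕ) * A := by
    rw [show 8 * (η / 16) = η / 2 by ring]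
    refine (mul_rpow_le_mul_of_rpow_le_mul (A := A) hp0 (by positivity) (Nat.cast_nonneg Y) hKY
      (by rwa [div_mul_eq_mul_div])).trans ?_
    gcongr
    omega
  have hWup : ((Y + K : ℕ) * A : ℝ) ≤ (p : ℝ) ^ (E + 2) := by
    rw [Nat.cast_add]
    exact add_mul_le_rpow_add_two hδ hpδ hE hKp hY (by positivity) (by exact_mod_cast hAp.le)
  refine sq_card_badPoints_le hs hδ (by positivity) (by linarith) (by exact_mod_cast hK0) hA hAp
    hB hBp hBs hAB (fun n hn => hdiv n (le_trans ?_ hWup)) hWlow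
  exact_mod_cast (mem_Icc.1 hn).2

lemma eventually_card_badPoints_le {η δ E : ℝ} (hη : 0 < η) (hη2 : η ≤ 2) (hδ : 0 < δ)
    (hE : 2 ≤ E) :
    ∀ᶠ p : ℕ in atTop, ∀ [Fact p.Prime] (K Y : ℕ), (p : ℝ) ^ η ≤ K →
      (p : ℝ) ^ (1 / 2 + η) ≤ K * Y → (Y : ℝ) ≤ (p : ℝ) ^ E →
      (#(badPoints p K Y δ) : ℝ) ≤ (p : ℝ) ^ (-(η / 16)) * Y := by
  obtain ⟨C, hC⟩ := eventually_sq_card_badPoints_le hη hη2 hδ hE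
  filter_upwards [hC, eventually_le_natCast_rpow C (by positivity : 0 < η / 16),
    eventually_gt_atTop 2] with p hbad hpC hp2 _ K Y hK hKY hY
  have hp0 : (0 : ℝ) < p := by exact_mod_cast two_pos.trans hp2
  rcases lt_or_ge (p : ℝ) (δ * K) with hKp | hKp
  · rw [badPoints_eq_empty hp2.ne' hKp Y, card_empty, Nat.cast_zero]
    positivity
  refine le_of_sq_le_sq ?_ (by positivity)
  calc (#(badPoints p K Y δ) : ℝ) ^ 2 ≤ C * (p : ℝ) ^ (-(3 * (η / 16))) * Y ^ 2 :=
        hbad K Y hK hKp hKY hY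
    _ ≤ (p : ℝ) ^ (η / 16) * (p : ℝ) ^ (-(3 * (η / 16))) * Y ^ 2 := by gcongr
    _ = ((p : ℝ) ^ (-(η / 16)) * Y) ^ 2 := by
        rw [mul_pow, ← Real.rpow_add hp0, sq ((p : ℝ) ^ _), ← Real.rpow_add hp0]
        ring_nf

end BadPointsAsymptotics

section QuadraticResidues

variable {p : ℕ} [Fact p.Prime]

lemma isQuadRes_iff_pow_eq_one {z : ℤ} :
    IsQuadRes p z ↔ (z : ZMod p) ^ (p / 2) = 1 := by
  have hsq : (∃ y : ℤ, y ^ 2 ≡ z [ZMOD p]) ↔ IsSquare (z : ZMod p) := by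
    rw [isSquare_iff_exists_sq, (ZMod.intCast_surjective (n := p)).exists]
    refine exists_congr fun y => ?_
    rw [← ZMod.intCast_eq_intCast_iff, Int.cast_pow, eq_comm]
  rw [IsQuadRes, hsq, ← ZMod.intCast_zmod_eq_zero_iff_dvd]
  constructor
  · rintro ⟨hz, hsquare⟩
    exact (ZMod.euler_criterion p hz).1 hsquare
  · intro hpow
    have hz : (z : ZMod p) ≠ 0 := by
      intro hz
      have h2 := (Fact.out : p.Prime).two_le
      rw [hz, zero_pow (by omega)] at hpow
      exact zero_ne_one hpow
    exact ⟨hz, (ZMod.euler_criterion p hz).2 hpow⟩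

lemma add_quadCharSum_le (hp : p ≠ 2) (K : ℕ) (y : ZMod p) :
    K + quadCharSum p K y ≤
      2 * #{k ∈ Icc 1 K | (y + (k : ℕ)) ^ (p / 2) = 1} + (K / p + 1) := by
  have hzero : (#{k ∈ Icc 1 K | y + (k : ℕ) = 0} : ℝ) ≤ K / p + 1 := by
    have hcard := card_filter_natCast_eq_le (p := p) K (-y)
    simp only [eq_neg_iff_add_eq_zero, add_comm _ y] at hcard
    calc (#{k ∈ Icc 1 K | y + (k : ℕ) = 0} : ℝ) ≤ (K / p : ℕ) + 1 := by exact_mod_cast hcard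
      _ ≤ K / p + 1 := by gcongr; exact Nat.cast_div_le
  have hsum := sum_le_sum fun k (_ : k ∈ Icc 1 K) => one_add_mul_quadChar_le hp 1 (y + (k : ℕ))
  simp only [Units.val_one, Int.cast_one, one_mul, sum_add_distrib, ← mul_sum, sum_boole,
    sum_const, Nat.card_Icc, Nat.add_sub_cancel, nsmul_eq_mul, mul_one] at hsum
  exact hsum.trans (by gcongr)

open Classical in
lemma le_card_filter_isQuadRes {K : ℕ} {z : ℤ} (hp : 8 ≤ p) (hK : 8 ≤ K)
    (hz : (z : ZMod p) ∉ largeSumSet p K (1 / 4)) :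
    (K / 4 : ℝ) ≤ #{k ∈ Icc (1 : ℤ) K | IsQuadRes p (z + k)} := by
  have hp2 : p ≠ 2 := by omega
  have hcard : #{k ∈ Icc 1 K | ((z : ZMod p) + (k : ℕ)) ^ (p / 2) = 1} ≤
      #{k ∈ Icc (1 : ℤ) K | IsQuadRes p (z + k)} := by
    refine card_le_card_of_injOn ((↑) : ℕ → ℤ) (fun k hk => ?_) Nat.cast_injective.injOn
    simp only [mem_coe, mem_filter, mem_Icc, isQuadRes_iff_pow_eq_one] at hk ⊢
    push_cast
    exact ⟨by omega, hk.2⟩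
  have hKp : (K / p : ℝ) ≤ K / 8 := by
    gcongr
    exact_mod_cast hp
  have hK8 : (8 : ℝ) ≤ K := by exact_mod_cast hK
  rw [mem_largeSumSet, not_le, abs_lt] at hz
  have hsum := add_quadCharSum_le hp2 K (z : ZMod p)
  refine le_trans ?_ (Nat.cast_le.2 hcard)
  linarith

end QuadraticResidues

section Products

open Filter

lemma card_filter_toNat_mul_mem_le {S : Finset (ℤ × ℤ)} {T : Finset ℕ} {D : ℕ}
    (hS : ∀ t ∈ S, 0 < t.1 ∧ 0 < t.2) (hT : 0 ∉ T) (hD : ∀ n ∈ T, #n.divisors ≤ D) :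
    #{t ∈ S | t.1.toNat * t.2.toNat ∈ T} ≤ D * #T := by
  refine card_filter_mul_mem_le (fun t ht u hu htu => ?_) hT hD
  have ht0 := hS t ht
  have hu0 := hS u hu
  rw [Prod.mk.injEq] at htu
  exact Prod.ext (by omega) (by omega)

open Classical in
lemma sub_mul_le_card_isQuadRes {p : ℕ} [Fact p.Prime] {S : Finset (ℤ × ℤ)} {K Y D : ℕ}
    (hp : 8 ≤ p) (hK : 8 ≤ K) (hS : ∀ t ∈ S, 0 < t.1 ∧ 0 < t.2 ∧ t.1 * t.2 ≤ Y)
    (hD : ∀ n ∈ Icc 1 Y, #n.divisors ≤ D) :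
    (#S - D * #(badPoints p K Y (1 / 4)) : ℝ) * (K / 4) ≤
      #{t ∈ S ×ˢ Icc (1 : ℤ) K | IsQuadRes p (t.1.1 * t.1.2 + t.2)} := by
  set T := badPoints p K Y (1 / 4)
  set good := {t ∈ S | t.1.toNat * t.2.toNat ∉ T}
  have hgood : (#S - D * #T : ℝ) ≤ #good := by
    have hbad : #{t ∈ S | t.1.toNat * t.2.toNat ∈ T} ≤ D * #T :=
      card_filter_toNat_mul_mem_le (fun t ht => ⟨(hS t ht).1, (hS t ht).2.1⟩)
        (fun h0 => by simpa using (mem_badPoints.1 h0).1) fun n hn => hD n (mem_badPoints.1 hn).1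
    rw [sub_le_iff_le_add']
    exact_mod_cast (card_filter_add_card_filter_not (s := S) _).symm.trans_le
      (Nat.add_le_add_right hbad _)
  have hresidues : ∀ t ∈ good,
      (K / 4 : ℝ) ≤ #{k ∈ Icc (1 : ℤ) K | IsQuadRes p (t.1 * t.2 + k)} := by
    intro t ht
    obtain ⟨htS, htT⟩ := mem_filter.1 ht
    obtain ⟨h1, h2, hY⟩ := hS t htS
    have hcast : ((t.1.toNat * t.2.toNat : ℕ) : ℤ) = t.1 * t.2 := by
      rw [Nat.cast_mul, Int.toNat_of_nonneg h1.le, Int.toNat_of_nonneg h2.le]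
    have hIcc : t.1.toNat * t.2.toNat ∈ Icc 1 Y := by
      have hpos := mul_pos h1 h2
      exact mem_Icc.2 ⟨by omega, by omega⟩
    refine le_card_filter_isQuadRes hp hK fun hlarge => htT (mem_badPoints.2 ⟨hIcc, ?_⟩)
    rwa [← hcast, Int.cast_natCast] at hlarge
  calc (#S - D * #T : ℝ) * (K / 4) ≤ #good * (K / 4) := by gcongr
    _ ≤ ∑ t ∈ good, (#{k ∈ Icc (1 : ℤ) K | IsQuadRes p (t.1 * t.2 + k)} : ℝ) := by
        rw [← nsmul_eq_mul]
        exact card_nsmul_le_sum _ _ _ hresidues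
    _ ≤ ∑ t ∈ S, (#{k ∈ Icc (1 : ℤ) K | IsQuadRes p (t.1 * t.2 + k)} : ℝ) :=
        sum_le_sum_of_subset_of_nonneg (filter_subset _ _) fun _ _ _ => Nat.cast_nonneg _
    _ = #{t ∈ S ×ˢ Icc (1 : ℤ) K | IsQuadRes p (t.1.1 * t.1.2 + t.2)} := by
        simp only [card_filter, sum_product, Nat.cast_sum]

open Classical in
theorem eventually_mul_le_card_isQuadRes {c₀ η : ℝ} (hc₀ : 0 < c₀) (hη : 0 < η) (E : ℝ) :
    ∀ᶠ p : ℕ in atTop, p.Prime → ∀ (K Y : ℕ) (S : Finset (ℤ × ℤ)), (p : ℝ) ^ η ≤ K →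
      (p : ℝ) ^ (1 / 2 + η) ≤ K * Y → (Y : ℝ) ≤ (p : ℝ) ^ E →
      (∀ t ∈ S, 0 < t.1 ∧ 0 < t.2 ∧ t.1 * t.2 ≤ Y) → c₀ * Y ≤ #S →
      c₀ / 8 * (K * Y) ≤ #{t ∈ S ×ˢ Icc (1 : ℤ) K | IsQuadRes p (t.1.1 * t.1.2 + t.2)} := by
  set θ := min η 2
  have hθ : 0 < θ := lt_min hη two_pos
  filter_upwards [eventually_card_badPoints_le (δ := 1 / 4) hθ (min_le_right _ _) (by norm_num)
      (le_max_right E 2), eventually_card_divisors_le_rpow E (by positivity : 0 < θ / 32),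
    eventually_le_natCast_rpow 8 hθ,
    eventually_le_natCast_rpow (2 / c₀) (by positivity : 0 < θ / 32), eventually_ge_atTop 8]
    with p hbad hdiv hpθ hpc hp8 hp K Y S hK hKY hY hS hcard
  have : Fact p.Prime := ⟨hp⟩
  have hp1 : (1 : ℝ) ≤ p := by exact_mod_cast hp.one_le
  have hp0 : (0 : ℝ) < p := by linarith
  have hmono {a b : ℝ} (hab : a ≤ b) : (p : ℝ) ^ a ≤ (p : ℝ) ^ b :=
    Real.rpow_le_rpow_of_exponent_le hp1 hab
  have hKθ : (p : ℝ) ^ θ ≤ K := (hmono (min_le_left _ _)).trans hK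
  have hfew := hbad K Y hKθ ((hmono (by gcongr; exact min_le_left _ _)).trans hKY)
    (hY.trans (hmono (le_max_left _ _)))
  set D := ⌊(p : ℝ) ^ (θ / 32)⌋₊
  have hD : ∀ n ∈ Icc 1 Y, #n.divisors ≤ D := fun n hn =>
    Nat.le_floor (hdiv n ((Nat.cast_le.2 (mem_Icc.1 hn).2).trans hY))
  have hDbad : D * #(badPoints p K Y (1 / 4)) ≤ c₀ / 2 * Y := by
    calc D * #(badPoints p K Y (1 / 4))
        ≤ (p : ℝ) ^ (θ / 32) * ((p : ℝ) ^ (-(θ / 16)) * Y) := by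
          gcongr
          exact Nat.floor_le (by positivity)
      _ = ((p : ℝ) ^ (θ / 32))⁻¹ * Y := by
          rw [← mul_assoc, ← Real.rpow_add hp0, ← Real.rpow_neg hp0.le]
          ring_nf
      _ ≤ (2 / c₀)⁻¹ * Y := by gcongr
      _ = c₀ / 2 * Y := by rw [inv_div]
  calc c₀ / 8 * (K * Y) = (c₀ * Y - c₀ / 2 * Y) * (K / 4) := by ring
    _ ≤ (#S - D * #(badPoints p K Y (1 / 4))) * (K / 4) := by gcongr
    _ ≤ _ := sub_mul_le_card_isQuadRes hp8 (by exact_mod_cast hpθ.trans hKθ) hS hD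

end Products

section ProductSets

open Filter

lemma rpow_half_add_le_mul {x a η T : ℝ} (hx : 1 ≤ x) (ha : 1 ≤ a) (hT : 0 < T) :
    x ^ (1 / 2 + η) ≤ (x ^ (a + η) / T ^ 2 + x ^ η) * T := by
  have hx0 : 0 < x := by linarith
  set u := x ^ (a / 2)
  have hu : 0 < u := by positivity
  have hau : x ^ a = u ^ 2 := by
    rw [← Real.rpow_mul_natCast hx0.le, Nat.cast_ofNat, div_mul_cancel₀ a two_ne_zero]
  have huT : u ≤ u ^ 2 / T + T := by
    rw [div_add' _ _ _ hT.ne', le_div_iff₀ hT]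
    nlinarith [sq_nonneg (u - T)]
  calc x ^ (1 / 2 + η) ≤ x ^ (a / 2 + η) :=
        Real.rpow_le_rpow_of_exponent_le hx (by linarith)
    _ = x ^ η * u := by rw [Real.rpow_add hx0, mul_comm]
    _ ≤ x ^ η * (u ^ 2 / T + T) := by gcongr
    _ = (x ^ (a + η) / T ^ 2 + x ^ η) * T := by
        rw [Real.rpow_add hx0, hau]
        field_simp

lemma eventually_rpow_le_natFloor {η : ℝ} (hη : 0 < η) :
    ∀ᶠ p : ℕ in atTop, ∀ a T : ℝ, 1 ≤ a → 0 < T →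
      (p : ℝ) ^ (η / 2) ≤ ⌊(p : ℝ) ^ (a + η) / T ^ 2 + (p : ℝ) ^ η⌋₊ ∧
        (p : ℝ) ^ (1 / 2 + η / 2) ≤ ⌊(p : ℝ) ^ (a + η) / T ^ 2 + (p : ℝ) ^ η⌋₊ * T := by
  filter_upwards [eventually_le_natCast_rpow 2 (half_pos hη), eventually_ge_atTop 1]
    with p hp2 hp a T ha hT
  have hp1 : (1 : ℝ) ≤ p := by exact_mod_cast hp
  have hp0 : (0 : ℝ) < p := by linarith
  have hhalf (b : ℝ) : 2 * (p : ℝ) ^ (b + η / 2) ≤ (p : ℝ) ^ (b + η) := by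
    rw [← add_halves η, ← add_assoc, Real.rpow_add hp0 (b + _), add_halves, mul_comm]
    gcongr
  have hη2 : 2 * (p : ℝ) ^ (η / 2) ≤ (p : ℝ) ^ η := by simpa using hhalf 0
  set X := (p : ℝ) ^ (a + η) / T ^ 2 + (p : ℝ) ^ η
  have hX : (p : ℝ) ^ η ≤ X := le_add_of_nonneg_left (by positivity)
  have hfloor : X / 2 ≤ ⌊X⌋₊ := (Nat.div_two_lt_floor (by linarith)).le
  refine ⟨by linarith, ?_⟩
  calc (p : ℝ) ^ (1 / 2 + η / 2) ≤ (p : ℝ) ^ (1 / 2 + η) / 2 := by linarith [hhalf (1 / 2)]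
    _ ≤ X * T / 2 := by gcongr; exact rpow_half_add_le_mul hp1 ha hT
    _ = X / 2 * T := by ring
    _ ≤ ⌊X⌋₊ * T := by gcongr

lemma card_le_of_forall_mem_Icc {s : Finset ℤ} {p : ℕ} (hs : ∀ m ∈ s, 1 ≤ m ∧ m ≤ p) :
    #s ≤ p := by
  simpa using card_le_card fun m hm => mem_Icc.2 (hs m hm)

lemma mul_le_natFloor_mul {m n : ℤ} {x y : ℝ} (hm : m ≤ x) (hn : n ≤ y) (hn0 : 0 ≤ n)
    (hx : 0 ≤ x) : m * n ≤ (⌊x * y⌋₊ : ℤ) := by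
  have hn0' : (0 : ℝ) ≤ n := by exact_mod_cast hn0
  rw [Int.natCast_floor_eq_floor (mul_nonneg hx (hn0'.trans hn)), Int.le_floor, Int.cast_mul]
  gcongr

open Classical in
theorem eventually_mul_le_card_isQuadRes_product {c₀ η : ℝ} (hc₀ : 0 < c₀) (hη : 0 < η) :
    ∀ᶠ p : ℕ in atTop, p.Prime → ∀ (M N : ℝ), 1 ≤ M → 1 ≤ N → ∀ (ℳ 𝒩 : Finset ℤ),
      (∀ m ∈ ℳ, (m : ℝ) ≤ 2 * M ∧ 1 ≤ m ∧ m ≤ (p : ℤ)) →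
      (∀ n ∈ 𝒩, (n : ℝ) ≤ 2 * N ∧ 1 ≤ n ∧ n ≤ (p : ℤ)) →
      c₀ * M ≤ #ℳ → c₀ * N ≤ #𝒩 →
      ∀ K : ℕ, (p : ℝ) ^ η ≤ K → (p : ℝ) ^ (1 / 2 + η) ≤ K * (M * N) →
      c₀ ^ 2 / 16 * K * M * N ≤
        #{t ∈ (ℳ ×ˢ 𝒩) ×ˢ Icc (1 : ℤ) K | IsQuadRes p (t.1.1 * t.1.2 + t.2)} := by
  filter_upwards [eventually_mul_le_card_isQuadRes (c₀ := c₀ ^ 2 / 4) (by positivity) hη 3,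
    eventually_le_natCast_rpow (4 / c₀ ^ 2) one_pos]
    with p hpairs hpc hp M N hM hN ℳ 𝒩 hℳ h𝒩 hMc hNc K hK hKMN
  have hMN : 1 ≤ M * N := one_le_mul_of_one_le_of_one_le hM hN
  have hcard : c₀ ^ 2 * (M * N) ≤ #ℳ * #𝒩 := by
    calc c₀ ^ 2 * (M * N) = c₀ * M * (c₀ * N) := by ring
      _ ≤ #ℳ * #𝒩 := by gcongr
  have hmul : 2 * M * (2 * N) = 4 * (M * N) := by ring
  set Y := ⌊2 * M * (2 * N)⌋₊
  have hYup : Y ≤ 4 * (M * N) := hmul ▸ Nat.floor_le (by positivity)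
  have hYlow : 2 * (M * N) ≤ Y := by
    linarith [Nat.div_two_lt_floor (by linarith : 1 ≤ 2 * M * (2 * N))]
  have hYp : (Y : ℝ) ≤ (p : ℝ) ^ (3 : ℝ) := by
    calc (Y : ℝ) ≤ 4 / c₀ ^ 2 * (c₀ ^ 2 * (M * N)) := by
          rwa [← mul_assoc, div_mul_cancel₀ _ (by positivity)]
      _ ≤ (p : ℝ) ^ (1 : ℝ) * (#ℳ * #𝒩) := by gcongr
      _ ≤ (p : ℝ) ^ (1 : ℝ) * (p * p) := by
          gcongr
          · exact card_le_of_forall_mem_Icc fun m hm => (hℳ m hm).2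
          · exact card_le_of_forall_mem_Icc fun n hn => (h𝒩 n hn).2
      _ = (p : ℝ) ^ (3 : ℝ) := by norm_cast; ring
  have hprod : ∀ t ∈ ℳ ×ˢ 𝒩, 0 < t.1 ∧ 0 < t.2 ∧ t.1 * t.2 ≤ Y := by
    rintro ⟨m, n⟩ ht
    obtain ⟨⟨hm2, hm1, -⟩, hn2, hn1, -⟩ := (mem_product.1 ht).imp (hℳ m) (h𝒩 n)
    exact ⟨hm1, hn1, mul_le_natFloor_mul hm2 hn2 (by omega) (by positivity)⟩
  have hdense : c₀ ^ 2 / 4 * Y ≤ #(ℳ ×ˢ 𝒩) := by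
    calc c₀ ^ 2 / 4 * Y ≤ c₀ ^ 2 / 4 * (4 * (M * N)) := by gcongr
      _ = c₀ ^ 2 * (M * N) := by ring
      _ ≤ #(ℳ ×ˢ 𝒩) := by rwa [card_product, Nat.cast_mul]
  calc c₀ ^ 2 / 16 * K * M * N = c₀ ^ 2 / 4 / 8 * (K * (2 * (M * N))) := by ring
    _ ≤ c₀ ^ 2 / 4 / 8 * (K * Y) := by gcongr
    _ ≤ _ := hpairs hp K Y _ hK (hKMN.trans (by gcongr; linarith)) hYp hprod hdense

open Classical in
theorem iwaniec_sarkozy_analogue_count_general {c₀ η : ℝ} (hc₀ : 0 < c₀) (hη : 0 < η) :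
    ∃ c : ℝ, 0 < c ∧ ∃ P : ℝ, ∀ p : ℕ, p.Prime → P ≤ (p : ℝ) → ∀ a : ℝ, 1 ≤ a →
      ∀ M N : ℝ, 1 ≤ M → 1 ≤ N → ∀ ℳ 𝒩 : Finset ℤ,
        (∀ m ∈ ℳ, (m : ℝ) ≤ 2 * M ∧ 1 ≤ m ∧ m ≤ (p : ℤ)) →
        (∀ n ∈ 𝒩, (n : ℝ) ≤ 2 * N ∧ 1 ≤ n ∧ n ≤ (p : ℤ)) →
        c₀ * M ≤ #ℳ → c₀ * N ≤ #𝒩 →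
      ∀ K : ℕ, ⌊(p : ℝ) ^ (a + η) / (M * N) ^ 2 + (p : ℝ) ^ η⌋₊ ≤ K →
      c * K * M * N ≤
        #{t ∈ (ℳ ×ˢ 𝒩) ×ˢ Icc (1 : ℤ) K | IsQuadRes p (t.1.1 * t.1.2 + t.2)} := by
  obtain ⟨P, hP⟩ := eventually_atTop.1
    ((eventually_mul_le_card_isQuadRes_product hc₀ (half_pos hη)).and
      (eventually_rpow_le_natFloor hη))
  refine ⟨c₀ ^ 2 / 16, by positivity, P, fun p hp hpP a ha M N hM hN ℳ 𝒩 hℳ h𝒩 hMc hNc K hK => ?_⟩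
  obtain ⟨hmain, hfloor⟩ := hP p (by exact_mod_cast hpP)
  obtain ⟨hpK, hpKMN⟩ := hfloor a (M * N) ha (by positivity)
  exact hmain hp M N hM hN ℳ 𝒩 hℳ h𝒩 hMc hNc K (hpK.trans (by exact_mod_cast hK))
    (hpKMN.trans (by gcongr))

end ProductSets

open Classical in
/-- Quantitative version of Theorem 2.11: the number of triples `(m, n, k)` with
`m·n + k` a quadratic residue modulo `p` is of the expected order of magnitude. -/
theorem iwaniec_sarkozy_analogue_count (r : ℕ) (hr : 0 < r) (c₀ η : ℝ)
    (hc₀ : 0 < c₀) (hc₀' : c₀ < 1) (hη : 0 < η) :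
    ∃ c : ℝ, 0 < c ∧ ∃ P : ℝ, ∀ (p : ℕ), p.Prime → P ≤ (p : ℝ) →
      ∀ (M N : ℝ), 1 ≤ M → 1 ≤ N →
        M ^ 4 * N ^ 2 ≥ (p : ℝ) ^ (1 + 1 / (r : ℝ) + η : ℝ) →
      ∀ (ℳ 𝒩 : Finset ℤ),
        (∀ m ∈ ℳ, M ≤ (m : ℝ) ∧ (m : ℝ) ≤ 2 * M ∧ 1 ≤ m ∧ m ≤ (p : ℤ)) →
        (∀ n ∈ 𝒩, N ≤ (n : ℝ) ∧ (n : ℝ) ≤ 2 * N ∧ 1 ≤ n ∧ n ≤ (p : ℤ)) →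
        c₀ * M ≤ (ℳ.card : ℝ) → c₀ * N ≤ (𝒩.card : ℝ) →
      ∀ K : ℕ, K = ⌊(p : ℝ) ^ (1 + 1 / (r : ℝ) + η : ℝ) / (M * N) ^ 2 + (p : ℝ) ^ η⌋₊ →
      c * K * M * N ≤
        ((((ℳ ×ˢ 𝒩) ×ˢ Finset.Icc (1 : ℤ) (K : ℤ)).filter
          fun t => IsQuadRes p (t.1.1 * t.1.2 + t.2)).card : ℝ) := by
  obtain ⟨c, hc, P, h⟩ := iwaniec_sarkozy_analogue_count_general hc₀ hη
  exact ⟨c, hc, P, fun p hp hpP M N hM hN _ ℳ 𝒩 hℳ h𝒩 hMc hNc K hK =>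
    h p hp hpP (1 + 1 / r) (le_add_of_nonneg_right (by positivity)) M N hM hN ℳ 𝒩
      (fun m hm => (hℳ m hm).2) (fun n hn => (h𝒩 n hn).2) hMc hNc K hK.ge⟩
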